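/- arXiv:1706.08465 — 3 statements merged into one kernel-verified Lean document; each statement's English description precedes it below -/
import Mathlib

section
/- Let H be a P^4_2-free 4-uniform hypergraph with minimum degree at least 11. Then the signature of no edge e contains a 3-element set and a 2-element set intersecting in exactly one vertex. -/
section aux
variable {V : Type*} [DecidableEq V]

lemma aux_n1 (H : Finset (Finset V)) (huniform : ∀ e ∈ H, e.card = 4)
    (hfree : ∀ e ∈ H, ∀ f ∈ H, e ≠ f → (e ∩ f).card ≠ 1)
    {a b c d : V} (he : ({a, b, c, d} : Finset V) ∈ H) {h : Finset V} (hh : h ∈ H) :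
    (a ∈ h → b ∈ h ∨ c ∈ h ∨ d ∈ h) ∧ (b ∈ h → a ∈ h ∨ c ∈ h ∨ d ∈ h) ∧
    (c ∈ h → a ∈ h ∨ b ∈ h ∨ d ∈ h) ∧ (d ∈ h → a ∈ h ∨ b ∈ h ∨ c ∈ h) := by
  have key : ∀ x, ({a, b, c, d} : Finset V) ∩ h ≠ {x} := by
    intro x hx
    by_cases heq : ({a, b, c, d} : Finset V) = h
    · rw [heq, Finset.inter_self] at hx
      have := huniform h hh
      rw [hx] at this
      simp at this
    · exact hfree _ he _ hh heq (by rw [hx]; simp)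
  refine ⟨fun hx => ?_, fun hx => ?_, fun hx => ?_, fun hx => ?_⟩
  · by_contra hc
    exact key a (by ext t; simp; grind)
  · by_contra hc
    exact key b (by ext t; simp; grind)
  · by_contra hc
    exact key c (by ext t; simp; grind)
  · by_contra hc
    exact key d (by ext t; simp; grind)

lemma aux_eq4 {h : Finset V} (hc : h.card = 4) {a b c d : V} (hn : [a, b, c, d].Nodup)
    (ha : a ∈ h) (hb : b ∈ h) (hcc : c ∈ h) (hd : d ∈ h) : h = {a, b, c, d} := by
  symm
  apply Finset.eq_of_subset_of_card_le
  · intro t; simp; grind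
  · have : ({a, b, c, d} : Finset V) = [a, b, c, d].toFinset := by simp
    rw [this, List.toFinset_card_of_nodup hn, hc]; simp

lemma aux_ext {h : Finset V} (hc : h.card = 4) {a b c : V} (hn : [a, b, c].Nodup)
    (ha : a ∈ h) (hb : b ∈ h) (hcc : c ∈ h) : ∃ y ∈ h, [a, b, c, y].Nodup := by
  have : ¬ h ⊆ [a, b, c].toFinset := by
    intro hs
    have h1 := Finset.card_le_card hs
    have h2 := List.toFinset_card_le [a, b, c]
    simp only [List.length_cons, List.length_nil] at h2
    omega
  obtain ⟨y, hy, hy2⟩ := Finset.not_subset.1 this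
  refine ⟨y, hy, ?_⟩
  simp at hn hy2 ⊢
  grind

lemma aux_deg (H : Finset (Finset V)) {v : V} 
    (hdeg : 11 ≤ (H.filter (fun e => v ∈ e)).card) (L : List (Finset V)) (hL : L.length < 11) :
    ∃ h ∈ H, v ∈ h ∧ h ∉ L := by
  have : ¬ (H.filter (fun e => v ∈ e)) ⊆ L.toFinset := by
    intro hs
    have h1 := Finset.card_le_card hs
    have h2 := List.toFinset_card_le L
    omega
  obtain ⟨y, hy, hy2⟩ := Finset.not_subset.1 this
  simp at hy hy2
  exact ⟨y, hy.1, hy.2, hy2⟩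

/-- edge through the outside vertex `y` is listed or contains `a, b`. -/
lemma aux_y (H : Finset (Finset V)) (huniform : ∀ e ∈ H, e.card = 4)
    (hfree : ∀ e ∈ H, ∀ f ∈ H, e ≠ f → (e ∩ f).card ≠ 1)
    {a b c d p q y : V} (hn : [a, b, c, d, p, q, y].Nodup)
    (h1 : ({a, b, c, d} : Finset V) ∈ H) (h2 : ({a, b, c, p} : Finset V) ∈ H)
    (h3 : ({c, d, p, q} : Finset V) ∈ H) (h4 : ({a, c, q, y} : Finset V) ∈ H)
    {h : Finset V} (hh : h ∈ H) (hy : y ∈ h)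
    (hL : h ∉ ([{a, c, d, y}, {a, c, p, y}, {a, c, q, y}, {a, d, p, y}, {b, c, d, y},
      {b, c, p, y}, {b, c, q, y}, {c, d, p, y}] : List (Finset V))) :
    ∃ z, z ∉ [a, b, c, d, p, q, y] ∧ h = {a, b, y, z} := by
  have k1 := aux_n1 H huniform hfree h1 hh
  have k2 := aux_n1 H huniform hfree h2 hh
  have k3 := aux_n1 H huniform hfree h3 hh
  have k4 := aux_n1 H huniform hfree h4 hh
  have hc := huniform h hh
  have E : ∀ u v w : V, [u, v, w, y].Nodup → u ∈ h → v ∈ h → w ∈ h → h = {u, v, w, y} :=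
    fun u v w hn hu hv hw => aux_eq4 hc hn hu hv hw hy
  simp only [List.mem_cons, List.not_mem_nil, or_false, not_or] at hL
  have hn' := hn
  simp only [List.nodup_cons, List.mem_cons, List.not_mem_nil, or_false, not_or,
    List.nodup_nil, not_false_eq_true, and_true] at hn'
  have e1 : ¬ (a ∈ h ∧ c ∈ h ∧ d ∈ h) := fun t => hL.1 (E _ _ _ (by simp; grind) t.1 t.2.1 t.2.2)
  have e2 : ¬ (a ∈ h ∧ c ∈ h ∧ p ∈ h) := fun t => hL.2.1 (E _ _ _ (by simp; grind) t.1 t.2.1 t.2.2)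
  have e3 : ¬ (a ∈ h ∧ c ∈ h ∧ q ∈ h) := fun t => hL.2.2.1 (E _ _ _ (by simp; grind) t.1 t.2.1 t.2.2)
  have e4 : ¬ (a ∈ h ∧ d ∈ h ∧ p ∈ h) := fun t => hL.2.2.2.1 (E _ _ _ (by simp; grind) t.1 t.2.1 t.2.2)
  have e5 : ¬ (b ∈ h ∧ c ∈ h ∧ d ∈ h) := fun t => hL.2.2.2.2.1 (E _ _ _ (by simp; grind) t.1 t.2.1 t.2.2)
  have e6 : ¬ (b ∈ h ∧ c ∈ h ∧ p ∈ h) := fun t => hL.2.2.2.2.2.1 (E _ _ _ (by simp; grind) t.1 t.2.1 t.2.2)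
  have e7 : ¬ (b ∈ h ∧ c ∈ h ∧ q ∈ h) := fun t => hL.2.2.2.2.2.2.1 (E _ _ _ (by simp; grind) t.1 t.2.1 t.2.2)
  have e8 : ¬ (c ∈ h ∧ d ∈ h ∧ p ∈ h) := fun t => hL.2.2.2.2.2.2.2 (E _ _ _ (by simp; grind) t.1 t.2.1 t.2.2)
  have m : ∀ u v w x : V, [u, v, w, y].Nodup → u ∈ h → v ∈ h → w ∈ h → x ∈ h →
      x = u ∨ x = v ∨ x = w ∨ x = y := by
    intro u v w x hn hu hv hw hx
    have := E u v w hn hu hv hw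
    rw [this] at hx
    simpa using hx
  clear hL E
  have m1 := m a b c d (by simp; grind)
  have m2 := m a b c p (by simp; grind)
  have m3 := m a b c q (by simp; grind)
  have m4 := m a b d q (by simp; grind)
  have m5 := m a b p q (by simp; grind)
  have m6 := m a b d p (by simp; grind)
  have m7 := m b d p q (by simp; grind)
  clear m
  have hab : a ∈ h ∧ b ∈ h ∧ c ∉ h ∧ d ∉ h ∧ p ∉ h ∧ q ∉ h := by
    have f1 : ¬ (a ∈ h ∧ b ∈ h ∧ c ∈ h ∧ d ∈ h) := by grind
    have f2 : ¬ (a ∈ h ∧ b ∈ h ∧ c ∈ h ∧ p ∈ h) := by grind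
    have f3 : ¬ (a ∈ h ∧ b ∈ h ∧ c ∈ h ∧ q ∈ h) := by grind
    have f4 : ¬ (a ∈ h ∧ b ∈ h ∧ d ∈ h ∧ q ∈ h) := by grind
    have f5 : ¬ (a ∈ h ∧ b ∈ h ∧ p ∈ h ∧ q ∈ h) := by grind
    have f6 : ¬ (a ∈ h ∧ b ∈ h ∧ d ∈ h ∧ p ∈ h) := by grind
    have f7 : ¬ (b ∈ h ∧ d ∈ h ∧ p ∈ h ∧ q ∈ h) := by grind
    clear m1 m2 m3 m4 m5 m6 m7 hn hn'
    by_cases a ∈ h <;> by_cases b ∈ h <;> by_cases c ∈ h <;> by_cases d ∈ h <;>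
      by_cases p ∈ h <;> by_cases q ∈ h <;> simp_all
  obtain ⟨ha, hb, hc', hd, hp, hq⟩ := hab
  obtain ⟨z, hz, hzn⟩ := aux_ext hc (a := a) (b := b) (c := y) (by simp; grind) ha hb hy
  refine ⟨z, ?_, aux_eq4 hc hzn ha hb hy hz⟩
  simp at hzn ⊢
  grind

lemma aux_main (H : Finset (Finset V)) (huniform : ∀ e ∈ H, e.card = 4)
    (hfree : ∀ e ∈ H, ∀ f ∈ H, e ≠ f → (e ∩ f).card ≠ 1)
    (hdeg : ∀ v : V, 11 ≤ (H.filter (fun e => v ∈ e)).card)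
    {a b c d p q y : V} (hn : [a, b, c, d, p, q, y].Nodup)
    (h1 : ({a, b, c, d} : Finset V) ∈ H) (h2 : ({a, b, c, p} : Finset V) ∈ H)
    (h3 : ({c, d, p, q} : Finset V) ∈ H) (h4 : ({a, c, q, y} : Finset V) ∈ H) : False := by
  obtain ⟨g1, hg1, hy1, hL1⟩ := aux_deg H (hdeg y) ([{a, c, d, y}, {a, c, p, y}, {a, c, q, y},
    {a, d, p, y}, {b, c, d, y}, {b, c, p, y}, {b, c, q, y}, {c, d, p, y}] : List (Finset V))
    (by simp)
  obtain ⟨g2, hg2, hy2, hL2⟩ := aux_deg H (hdeg y) (g1 :: ([{a, c, d, y}, {a, c, p, y},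
    {a, c, q, y}, {a, d, p, y}, {b, c, d, y}, {b, c, p, y}, {b, c, q, y}, {c, d, p, y}]
      : List (Finset V))) (by simp)
  rw [List.mem_cons, not_or] at hL2
  obtain ⟨z1, hz1, rfl⟩ := aux_y H huniform hfree hn h1 h2 h3 h4 hg1 hy1 hL1
  obtain ⟨z2, hz2, rfl⟩ := aux_y H huniform hfree hn h1 h2 h3 h4 hg2 hy2 hL2.2
  have hz : z1 ≠ z2 := by rintro rfl; exact hL2.1 rfl
  clear hL1 hL2 hy1 hy2
  simp only [List.nodup_cons, List.mem_cons, List.not_mem_nil, or_false, not_or,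
    List.nodup_nil, not_false_eq_true, and_true] at hn hz1 hz2
  have hX : ∃ h ∈ H, q ∈ h ∧ h ∉ ([{a, b, c, q}, {a, b, d, q}, {a, b, p, q}, {a, c, d, q},
      {a, c, p, q}, {a, d, p, q}, {b, c, d, q}, {b, c, p, q}, {c, d, p, q}, {a, c, y, q},
      {b, c, y, q}] : List (Finset V)) := by
    by_cases hb : ({b, c, y, q} : Finset V) ∈ H
    · obtain ⟨h, hh, hq, hL⟩ := aux_deg H (hdeg q) ([{a, b, c, q}, {a, b, d, q}, {a, b, p, q},
        {a, c, d, q}, {a, c, p, q}, {b, c, d, q}, {b, c, p, q}, {c, d, p, q}, {a, c, y, q},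
        {b, c, y, q}] : List (Finset V)) (by simp)
      refine ⟨h, hh, hq, ?_⟩
      have : h ≠ {a, d, p, q} := by
        rintro rfl
        have := (aux_n1 H huniform hfree hb hh).2.2.2
        simp at this
        grind
      simp only [List.mem_cons, List.not_mem_nil, or_false, not_or] at hL ⊢
      tauto
    · obtain ⟨h, hh, hq, hL⟩ := aux_deg H (hdeg q) ([{a, b, c, q}, {a, b, d, q}, {a, b, p, q},
        {a, c, d, q}, {a, c, p, q}, {a, d, p, q}, {b, c, d, q}, {b, c, p, q}, {c, d, p, q},
        {a, c, y, q}] : List (Finset V)) (by simp)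
      refine ⟨h, hh, hq, ?_⟩
      have : h ≠ {b, c, y, q} := by
        rintro rfl
        exact hb hh
      simp only [List.mem_cons, List.not_mem_nil, or_false, not_or] at hL ⊢
      tauto
  obtain ⟨h, hh, hq, hL⟩ := hX
  have k1 := aux_n1 H huniform hfree h1 hh
  have k2 := aux_n1 H huniform hfree h2 hh
  have k3 := aux_n1 H huniform hfree h3 hh
  have k4 := aux_n1 H huniform hfree h4 hh
  have k5 := aux_n1 H huniform hfree hg1 hh
  have k6 := aux_n1 H huniform hfree hg2 hh
  have hc := huniform h hh
  have E : ∀ u v w : V, [u, v, w, q].Nodup → u ∈ h → v ∈ h → w ∈ h → h = {u, v, w, q} :=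
    fun u v w hn hu hv hw => aux_eq4 hc hn hu hv hw hq
  simp only [List.mem_cons, List.not_mem_nil, or_false, not_or] at hL
  obtain ⟨l1, l2, l3, l4, l5, l6, l7, l8, l9, l10, l11⟩ := hL
  have e1 : ¬ (a ∈ h ∧ b ∈ h ∧ c ∈ h) := fun t => l1 (E _ _ _ (by simp; grind) t.1 t.2.1 t.2.2)
  have e2 : ¬ (a ∈ h ∧ b ∈ h ∧ d ∈ h) := fun t => l2 (E _ _ _ (by simp; grind) t.1 t.2.1 t.2.2)
  have e3 : ¬ (a ∈ h ∧ b ∈ h ∧ p ∈ h) := fun t => l3 (E _ _ _ (by simp; grind) t.1 t.2.1 t.2.2)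
  have e4 : ¬ (a ∈ h ∧ c ∈ h ∧ d ∈ h) := fun t => l4 (E _ _ _ (by simp; grind) t.1 t.2.1 t.2.2)
  have e5 : ¬ (a ∈ h ∧ c ∈ h ∧ p ∈ h) := fun t => l5 (E _ _ _ (by simp; grind) t.1 t.2.1 t.2.2)
  have e6 : ¬ (a ∈ h ∧ d ∈ h ∧ p ∈ h) := fun t => l6 (E _ _ _ (by simp; grind) t.1 t.2.1 t.2.2)
  have e7 : ¬ (b ∈ h ∧ c ∈ h ∧ d ∈ h) := fun t => l7 (E _ _ _ (by simp; grind) t.1 t.2.1 t.2.2)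
  have e8 : ¬ (b ∈ h ∧ c ∈ h ∧ p ∈ h) := fun t => l8 (E _ _ _ (by simp; grind) t.1 t.2.1 t.2.2)
  have e9 : ¬ (c ∈ h ∧ d ∈ h ∧ p ∈ h) := fun t => l9 (E _ _ _ (by simp; grind) t.1 t.2.1 t.2.2)
  have e10 : ¬ (a ∈ h ∧ c ∈ h ∧ y ∈ h) := fun t => l10 (E _ _ _ (by simp; grind) t.1 t.2.1 t.2.2)
  have e11 : ¬ (b ∈ h ∧ c ∈ h ∧ y ∈ h) := fun t => l11 (E _ _ _ (by simp; grind) t.1 t.2.1 t.2.2)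
  have e12 : ¬ (b ∈ h ∧ d ∈ h ∧ p ∈ h) := by
    intro t
    have := E _ _ _ (by simp; grind) t.1 t.2.1 t.2.2
    have k := k4.2.2.1 hq
    rw [this] at k
    simp at k
    grind
  have m : ∀ u, u ≠ z1 → u ≠ z2 → u ≠ c → u ≠ q → ¬ (u ∈ h ∧ c ∈ h ∧ z1 ∈ h ∧ z2 ∈ h) := by
    rintro u g1 g2 g3 g4 ⟨t1, t2, t3, t4⟩
    have := E u c z1 (by simp; grind) t1 t2 t3
    rw [this] at t4
    simp at t4
    grind
  have m1 := m a (by grind) (by grind) (by grind) (by grind)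
  have m2 := m b (by grind) (by grind) (by grind) (by grind)
  clear m E hn hz1 hz2 hz l1 l2 l3 l4 l5 l6 l7 l8 l9 l10 l11 hc h1 h2 h3 h4 hg1 hg2 hh hdeg huniform hfree
  by_cases a ∈ h <;> by_cases b ∈ h <;> by_cases c ∈ h <;> by_cases d ∈ h <;>
      by_cases p ∈ h <;> simp_all

lemma aux_main2 (H : Finset (Finset V)) (huniform : ∀ e ∈ H, e.card = 4)
    (hfree : ∀ e ∈ H, ∀ f ∈ H, e ≠ f → (e ∩ f).card ≠ 1)
    (hdeg : ∀ v : V, 11 ≤ (H.filter (fun e => v ∈ e)).card)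
    {a b c d p q : V} (hn : [a, b, c, d, p, q].Nodup)
    (h1 : ({a, b, c, d} : Finset V) ∈ H) (h2 : ({a, b, c, p} : Finset V) ∈ H)
    (h3 : ({c, d, p, q} : Finset V) ∈ H) : False := by
  obtain ⟨h, hh, hq, hL⟩ := aux_deg H (hdeg q) ([{a, b, c, q}, {a, b, d, q}, {a, b, p, q},
    {a, c, d, q}, {a, c, p, q}, {a, d, p, q}, {b, c, d, q}, {b, c, p, q}, {c, d, p, q},
    {b, d, p, q}] : List (Finset V)) (by simp)
  simp only [List.nodup_cons, List.mem_cons, List.not_mem_nil, or_false, not_or,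
    List.nodup_nil, not_false_eq_true, and_true] at hn
  have k1 := aux_n1 H huniform hfree h1 hh
  have k2 := aux_n1 H huniform hfree h2 hh
  have k3 := aux_n1 H huniform hfree h3 hh
  have hc := huniform h hh
  have E : ∀ u v w : V, [u, v, w, q].Nodup → u ∈ h → v ∈ h → w ∈ h → h = {u, v, w, q} :=
    fun u v w hn hu hv hw => aux_eq4 hc hn hu hv hw hq
  simp only [List.mem_cons, List.not_mem_nil, or_false, not_or] at hL
  obtain ⟨l1, l2, l3, l4, l5, l6, l7, l8, l9, l10⟩ := hL
  have e1 : ¬ (a ∈ h ∧ b ∈ h ∧ c ∈ h) := fun t => l1 (E _ _ _ (by simp; grind) t.1 t.2.1 t.2.2)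
  have e2 : ¬ (a ∈ h ∧ b ∈ h ∧ d ∈ h) := fun t => l2 (E _ _ _ (by simp; grind) t.1 t.2.1 t.2.2)
  have e3 : ¬ (a ∈ h ∧ b ∈ h ∧ p ∈ h) := fun t => l3 (E _ _ _ (by simp; grind) t.1 t.2.1 t.2.2)
  have e4 : ¬ (a ∈ h ∧ c ∈ h ∧ d ∈ h) := fun t => l4 (E _ _ _ (by simp; grind) t.1 t.2.1 t.2.2)
  have e5 : ¬ (a ∈ h ∧ c ∈ h ∧ p ∈ h) := fun t => l5 (E _ _ _ (by simp; grind) t.1 t.2.1 t.2.2)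
  have e6 : ¬ (a ∈ h ∧ d ∈ h ∧ p ∈ h) := fun t => l6 (E _ _ _ (by simp; grind) t.1 t.2.1 t.2.2)
  have e7 : ¬ (b ∈ h ∧ c ∈ h ∧ d ∈ h) := fun t => l7 (E _ _ _ (by simp; grind) t.1 t.2.1 t.2.2)
  have e8 : ¬ (b ∈ h ∧ c ∈ h ∧ p ∈ h) := fun t => l8 (E _ _ _ (by simp; grind) t.1 t.2.1 t.2.2)
  have e9 : ¬ (c ∈ h ∧ d ∈ h ∧ p ∈ h) := fun t => l9 (E _ _ _ (by simp; grind) t.1 t.2.1 t.2.2)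
  have e12 : ¬ (b ∈ h ∧ d ∈ h ∧ p ∈ h) := fun t => l10 (E _ _ _ (by simp; grind) t.1 t.2.1 t.2.2)
  clear l1 l2 l3 l4 l5 l6 l7 l8 l9 l10
  have key : c ∈ h ∧ d ∉ h ∧ p ∉ h ∧ ((a ∈ h ∧ b ∉ h) ∨ (b ∈ h ∧ a ∉ h)) := by
    clear E hn hc h1 h2 h3 hh hdeg huniform hfree
    by_cases a ∈ h <;> by_cases b ∈ h <;> by_cases c ∈ h <;> by_cases d ∈ h <;>
      by_cases p ∈ h <;> simp_all
  obtain ⟨kc, kd, kp, ⟨ka, kb⟩ | ⟨kb, ka⟩⟩ := key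
  · obtain ⟨y, hy, hyn⟩ := aux_ext hc (a := a) (b := c) (c := q) (by simp; grind) ka kc hq
    have := aux_eq4 hc hyn ka kc hq hy
    refine aux_main H huniform hfree hdeg (a := a) (b := b) (y := y) ?_ h1 h2 h3 (this ▸ hh)
    simp at hyn ⊢
    grind
  · obtain ⟨y, hy, hyn⟩ := aux_ext hc (a := b) (b := c) (c := q) (by simp; grind) kb kc hq
    have := aux_eq4 hc hyn kb kc hq hy
    refine aux_main H huniform hfree hdeg (a := b) (b := a) (y := y) ?_
      (by rwa [Finset.insert_comm]) (by rwa [Finset.insert_comm]) h3 (this ▸ hh)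
    simp at hyn ⊢
    grind

end aux

/-- In a `P^4_2`-free 4-uniform hypergraph with minimum degree at least 11,
the signature of no edge contains a 3-element set and a 2-element set
intersecting in exactly one vertex. -/
theorem stmt_11 {V : Type*} [Fintype V] [DecidableEq V]
    (H : Finset (Finset V))
    (huniform : ∀ e ∈ H, e.card = 4)
    (hfree : ∀ e ∈ H, ∀ f ∈ H, e ≠ f → (e ∩ f).card ≠ 1)
    (hdeg : ∀ v : V, 11 ≤ (H.filter (fun e => v ∈ e)).card) :
    ∀ e ∈ H, ¬ ∃ f ∈ H, ∃ g ∈ H, f ≠ e ∧ g ≠ e ∧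
      (e ∩ f).card = 3 ∧ (e ∩ g).card = 2 ∧
      ((e ∩ f) ∩ (e ∩ g)).card = 1 := by
  rintro e he ⟨f, hf, g, hg, -, -, hef, heg, hefg⟩
  have ce := huniform e he
  have cf := huniform f hf
  have cg := huniform g hg
  have t1 : ((e ∩ f) \ (e ∩ g)).card = 2 := by
    have := Finset.card_sdiff_add_card_inter (e ∩ f) (e ∩ g); omega
  have t2 : ((e ∩ g) \ (e ∩ f)).card = 1 := by
    have := Finset.card_sdiff_add_card_inter (e ∩ g) (e ∩ f)
    rw [Finset.inter_comm (e ∩ g)] at this; omega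
  have t3 : (f \ e).card = 1 := by
    have := Finset.card_sdiff_add_card_inter f e
    rw [Finset.inter_comm f] at this; omega
  obtain ⟨c, hc⟩ := Finset.card_eq_one.1 hefg
  obtain ⟨d, hd⟩ := Finset.card_eq_one.1 t2
  obtain ⟨p, hp⟩ := Finset.card_eq_one.1 t3
  obtain ⟨a, b, hab, hh⟩ := Finset.card_eq_two.1 t1
  have Hc : ∀ x, (x ∈ (e ∩ f) ∩ (e ∩ g)) ↔ x = c := by simp [hc]
  have Hd : ∀ x, (x ∈ (e ∩ g) \ (e ∩ f)) ↔ x = d := by simp [hd]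
  have Hp : ∀ x, (x ∈ f \ e) ↔ x = p := by simp [hp]
  have Hab : ∀ x, (x ∈ (e ∩ f) \ (e ∩ g)) ↔ x = a ∨ x = b := by simp [hh]
  clear hc hd hp hh t1 t2 t3 hef heg hefg
  simp only [Finset.mem_inter, Finset.mem_sdiff] at Hc Hd Hp Hab
  have c1 := (Hc c).2 rfl
  have d1 := (Hd d).2 rfl
  have p1 := (Hp p).2 rfl
  have a1 := (Hab a).2 (Or.inl rfl)
  have b1 := (Hab b).2 (Or.inr rfl)
  have eqe : e = {a, b, c, d} := aux_eq4 ce (by simp; grind) (by tauto) (by tauto) (by tauto) (by tauto)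
  have eqf : f = {a, b, c, p} := aux_eq4 cf (by simp; grind) (by tauto) (by tauto) (by tauto) (by tauto)
  have h1 := he
  rw [eqe] at h1
  have h2 := hf
  rw [eqf] at h2
  have pg : p ∈ g := by
    have := (aux_n1 H huniform hfree h2 hg).2.2.1 (by tauto)
    tauto
  obtain ⟨q, hq, hqn⟩ := aux_ext cg (a := c) (b := d) (c := p) (by simp; grind) (by tauto) (by tauto) pg
  have eqg : g = {c, d, p, q} := aux_eq4 cg hqn (by tauto) (by tauto) pg hq
  have h3 := hg
  rw [eqg] at h3
  refine aux_main2 H huniform hfree hdeg ?_ h1 h2 h3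
  simp at hqn ⊢
  grind
end

section
/- Let H be a P^4_2-free 4-uniform hypergraph with minimum degree at least 11. Then for every edge e, the signature of e consists either of exactly two disjoint 2-element sets, or of one 2-element set together with 3-element sets each containing that 2-element set (two triples intersecting on the dubleton). -/
/-- `s` belongs to the signature of the edge `e` of `H`. -/
def InSig {V : Type*} [DecidableEq V] (H : Finset (Finset V))
    (e s : Finset V) : Prop :=
  ∃ f ∈ H, f ≠ e ∧ e ∩ f = s

theorem two_eq {V : Type*} [DecidableEq V] {a : Finset V} (h : a.card = 2) {u w : V}
    (hu : u ∈ a) (hw : w ∈ a) (huw : u ≠ w) : a = {u, w} := by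
  symm
  apply Finset.eq_of_subset_of_card_le
  · intro z hz; grind
  · rw [h, Finset.card_pair huw]

theorem three_eq {V : Type*} [DecidableEq V] {a : Finset V} (h : a.card = 3) {u w z : V}
    (hu : u ∈ a) (hw : w ∈ a) (hz : z ∈ a) (huw : u ≠ w) (huz : u ≠ z) (hwz : w ≠ z) :
    a = {u, w, z} := by
  symm
  apply Finset.eq_of_subset_of_card_le
  · intro z hz; grind
  · rw [h, Finset.card_eq_three.2 ⟨u, w, z, huw, huz, hwz, rfl⟩]

theorem cov2 {V : Type*} [DecidableEq V] {A : Finset (Finset V)} {x z : V}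
    (h : ∀ a ∈ A, x ∈ a ∨ z ∈ a) :
    A.card ≤ (A.filter (x ∈ ·)).card + (A.filter (z ∈ ·)).card := by
  refine le_trans (Finset.card_le_card ?_) (Finset.card_union_le _ _)
  intro a ha; have := h a ha; grind

theorem cov3 {V : Type*} [DecidableEq V] {A : Finset (Finset V)} {x y z : V}
    (h : ∀ a ∈ A, x ∈ a ∨ y ∈ a ∨ z ∈ a) :
    A.card ≤ (A.filter (x ∈ ·)).card + (A.filter (y ∈ ·)).card + (A.filter (z ∈ ·)).card := by
  refine le_trans (Finset.card_le_card ?_) (le_trans (Finset.card_union_le (A.filter (x ∈ ·) ∪ A.filter (y ∈ ·)) _) (Nat.add_le_add_right (Finset.card_union_le _ _) _))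
  intro a ha; have := h a ha; grind

theorem split1 {V : Type*} [DecidableEq V] (A : Finset (Finset V)) (x : V) :
    A.card = (A.filter (x ∈ ·)).card + (A.filter (x ∉ ·)).card := by
  rw [Finset.card_filter_add_card_filter_not]

theorem meet {V : Type*} [DecidableEq V] {a b : Finset V} (h : (a ∩ b).Nonempty) :
    ∃ x, x ∈ a ∧ x ∈ b := by
  obtain ⟨x, hx⟩ := h
  exact ⟨x, by grind, by grind⟩

theorem star_of_deg {V : Type*} [DecidableEq V] {A : Finset (Finset V)}
    (hA : ∀ a ∈ A, a.card = 2) {b : Finset V} (hb : b.card = 2)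
    (hX : ∀ a ∈ A, (a ∩ b).Nonempty) {x : V} (hx : 3 ≤ (A.filter (x ∈ ·)).card) : x ∈ b := by
  by_contra hxb
  have : A.filter (x ∈ ·) ⊆ b.image (fun y => {x, y}) := by
    intro a ha
    rw [Finset.mem_filter] at ha
    obtain ⟨y, hy, hy'⟩ := meet (hX a ha.1)
    rw [Finset.mem_image]
    refine ⟨y, hy', (two_eq (hA a ha.1) ha.2 hy ?_).symm⟩
    rintro rfl; exact hxb hy'
  have := Finset.card_le_card this
  have h2 : (b.image (fun y => ({x, y} : Finset V))).card ≤ b.card := Finset.card_image_le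
  omega

theorem X1 {V : Type*} [DecidableEq V] {A B : Finset (Finset V)}
    (hA : ∀ a ∈ A, a.card = 2) (hB : ∀ a ∈ B, a.card = 2) (hB0 : B.Nonempty)
    (hX : ∀ a ∈ A, ∀ b ∈ B, (a ∩ b).Nonempty)
    (dA : ∀ x, (A.filter (x ∈ ·)).card ≤ 3) (dB : ∀ x, (B.filter (x ∈ ·)).card ≤ 3)
    {x : V} (hx : 3 ≤ (A.filter (x ∈ ·)).card) : A.card + B.card ≤ 7 := by
  have hs : ∀ b ∈ B, x ∈ b := fun b hb => star_of_deg hA (hB b hb) (fun a ha => hX a ha b hb) hx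
  have hB3 : B.card ≤ 3 := by
    have := dB x
    rwa [Finset.filter_true_of_mem hs] at this
  by_cases h1 : B.card ≤ 1
  · obtain ⟨b, hb⟩ := hB0
    obtain ⟨u, w, huw, rfl⟩ := Finset.card_eq_two.1 (hB b hb)
    have := cov2 (A := A) (x := u) (z := w) (fun a ha => by
      obtain ⟨y, hy, hy'⟩ := meet (hX a ha _ hb)
      grind)
    have := dA u; have := dA w
    omega
  · push Not at h1
    obtain ⟨b, hb, c, hc, hbc⟩ := Finset.one_lt_card.1 h1
    have h4 : (A.filter (x ∉ ·)).card ≤ 1 := by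
      rw [Finset.card_le_one]
      have key : ∀ a ∈ A.filter (x ∉ ·), ∀ y, y ∈ a ↔ y ≠ x ∧ (y ∈ b ∨ y ∈ c) := by
        intro a ha
        rw [Finset.mem_filter] at ha
        obtain ⟨y, hy, hyb⟩ := meet (hX a ha.1 b hb)
        obtain ⟨z, hz, hzc⟩ := meet (hX a ha.1 c hc)
        have e1 := two_eq (hB b hb) (hs b hb) hyb (by grind)
        have e2 := two_eq (hB c hc) (hs c hc) hzc (by grind)
        have e3 := two_eq (hA a ha.1) hy hz (by grind)
        intro w; grind
      intro a ha a' ha'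
      ext y
      rw [key a ha, key a' ha']
    have := split1 A x
    have := dA x
    omega

theorem X {V : Type*} [DecidableEq V] {A B : Finset (Finset V)}
    (hA : ∀ a ∈ A, a.card = 2) (hB : ∀ a ∈ B, a.card = 2) (hA0 : A.Nonempty) (hB0 : B.Nonempty)
    (hX : ∀ a ∈ A, ∀ b ∈ B, (a ∩ b).Nonempty)
    (dA : ∀ x, (A.filter (x ∈ ·)).card ≤ 3) (dB : ∀ x, (B.filter (x ∈ ·)).card ≤ 3) :
    A.card + B.card ≤ 7 := by
  by_cases h1 : ∃ x, 3 ≤ (A.filter (x ∈ ·)).card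
  · obtain ⟨x, hx⟩ := h1
    exact X1 hA hB hB0 hX dA dB hx
  by_cases h2 : ∃ x, 3 ≤ (B.filter (x ∈ ·)).card
  · obtain ⟨x, hx⟩ := h2
    have := X1 hB hA hA0 (fun a ha b hb => by rw [Finset.inter_comm]; exact hX b hb a ha) dB dA hx
    omega
  push Not at h1 h2
  by_contra hlt
  have cA : ∀ b ∈ B, ∀ u w, b = {u, w} → A.card ≤ (A.filter (u ∈ ·)).card + (A.filter (w ∈ ·)).card := by
    rintro b hb u w rfl
    exact cov2 (fun a ha => by
      obtain ⟨y, hy, hy'⟩ := meet (hX a ha _ hb)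
      grind)
  have cB : ∀ b ∈ A, ∀ u w, b = {u, w} → B.card ≤ (B.filter (u ∈ ·)).card + (B.filter (w ∈ ·)).card := by
    rintro b hb u w rfl
    exact cov2 (fun a ha => by
      obtain ⟨y, hy, hy'⟩ := meet (hX _ hb a ha)
      grind)
  have hA4 : A.card ≤ 4 := by
    obtain ⟨b, hb⟩ := hB0
    obtain ⟨u, w, huw, rfl⟩ := Finset.card_eq_two.1 (hB b hb)
    have := cA _ hb _ _ rfl
    have := h1 u; have := h1 w; omega
  have hB4 : B.card ≤ 4 := by
    obtain ⟨b, hb⟩ := hA0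
    obtain ⟨u, w, huw, rfl⟩ := Finset.card_eq_two.1 (hA b hb)
    have := cB _ hb _ _ rfl
    have := h2 u; have := h2 w; omega
  -- degrees of B at vertices are at most one
  have h3 : ∀ x, (B.filter (x ∈ ·)).card ≤ 1 := by
    intro x
    rw [Finset.card_le_one]
    intro b hb c hc
    rw [Finset.mem_filter] at hb hc
    by_contra hbc
    obtain ⟨u, hu, hux⟩ : ∃ u ∈ b, u ≠ x := by
      have := Finset.exists_mem_ne (s := b) (by rw [hB b hb.1]; norm_num) x
      exact this
    obtain ⟨w, hw, hwx⟩ : ∃ u ∈ c, u ≠ x := by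
      have := Finset.exists_mem_ne (s := c) (by rw [hB c hc.1]; norm_num) x
      exact this
    have e1 := two_eq (hB b hb.1) hb.2 hu hux.symm
    have e2 := two_eq (hB c hc.1) hc.2 hw hwx.symm
    have huw : u ≠ w := by rintro rfl; exact hbc (e1.trans e2.symm)
    have h4 : (A.filter (x ∉ ·)).card ≤ 1 := by
      rw [Finset.card_le_one]
      have key : ∀ a ∈ A.filter (x ∉ ·), a = {u, w} := by
        intro a ha
        rw [Finset.mem_filter] at ha
        obtain ⟨y, hy, hyb⟩ := meet (hX a ha.1 b hb.1)
        obtain ⟨z, hz, hzc⟩ := meet (hX a ha.1 c hc.1)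
        exact two_eq (hA a ha.1) (by grind) (by grind) huw
      intro a ha a' ha'
      rw [key a ha, key a' ha']
    have := split1 A x
    have := h1 x
    omega
  obtain ⟨b, hb⟩ := hA0
  obtain ⟨u, w, huw, rfl⟩ := Finset.card_eq_two.1 (hA b hb)
  have := cB _ hb _ _ rfl
  have := h3 u; have := h3 w; omega

/-- two distinct edges at `x`: an edge avoiding `x` is determined -/
theorem miss_le_one {V : Type*} [DecidableEq V] {A B : Finset (Finset V)}
    (hA : ∀ a ∈ A, a.card = 2) (hB : ∀ a ∈ B, a.card = 2)
    (hX : ∀ a ∈ A, ∀ b ∈ B, (a ∩ b).Nonempty) {x : V}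
    (h : 2 ≤ (B.filter (x ∈ ·)).card) : (A.filter (x ∉ ·)).card ≤ 1 := by
  obtain ⟨b, hb, c, hc, hbc⟩ := Finset.one_lt_card.1 h
  rw [Finset.mem_filter] at hb hc
  obtain ⟨u, hu, hux⟩ : ∃ u ∈ b, u ≠ x :=
    Finset.exists_mem_ne (s := b) (by rw [hB b hb.1]; norm_num) x
  obtain ⟨w, hw, hwx⟩ : ∃ u ∈ c, u ≠ x :=
    Finset.exists_mem_ne (s := c) (by rw [hB c hc.1]; norm_num) x
  have e1 := two_eq (hB b hb.1) hb.2 hu hux.symm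
  have e2 := two_eq (hB c hc.1) hc.2 hw hwx.symm
  have huw : u ≠ w := by rintro rfl; exact hbc (e1.trans e2.symm)
  rw [Finset.card_le_one]
  have key : ∀ a ∈ A.filter (x ∉ ·), a = {u, w} := by
    intro a ha
    rw [Finset.mem_filter] at ha
    obtain ⟨y, hy, hyb⟩ := meet (hX a ha.1 b hb.1)
    obtain ⟨z, hz, hzc⟩ := meet (hX a ha.1 c hc.1)
    exact two_eq (hA a ha.1) (by grind) (by grind) huw
  intro a ha a' ha'
  rw [key a ha, key a' ha']

theorem Y1 {V : Type*} [DecidableEq V] {A B : Finset (Finset V)} {Y : Finset V}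
    (hY : Y.card = 3)
    (hA : ∀ a ∈ A, a.card = 2) (hB : ∀ a ∈ B, a.card = 2)
    (hX : ∀ a ∈ A, ∀ b ∈ B, (a ∩ b).Nonempty)
    (hAY : ∀ a ∈ A, (a ∩ Y).Nonempty) (hBY : ∀ a ∈ B, (a ∩ Y).Nonempty)
    (dA : ∀ x ∈ Y, (A.filter (x ∈ ·)).card ≤ 2)
    (mB : ∀ x ∈ Y, ∃ b ∈ B, x ∉ b)
    (h4 : 4 ≤ A.card) : A.card + B.card ≤ 6 := by
  have hX' : ∀ b ∈ B, ∀ a ∈ A, (b ∩ a).Nonempty := fun b hb a ha => by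
    rw [Finset.inter_comm]; exact hX a ha b hb
  obtain ⟨a, ha, haY⟩ : ∃ a ∈ A, ¬ a ⊆ Y := by
    by_contra hcon
    push Not at hcon
    have : A ⊆ Finset.powersetCard 2 Y := fun a ha =>
      Finset.mem_powersetCard.2 ⟨hcon a ha, hA a ha⟩
    have := Finset.card_le_card this
    rw [Finset.card_powersetCard, hY] at this
    have h3 : Nat.choose 3 2 = 3 := rfl
    omega
  obtain ⟨z, hza, hzY⟩ := Finset.not_subset.1 haY
  obtain ⟨i, hia, hiY⟩ := meet (hAY a ha)
  have hiz : i ≠ z := by rintro rfl; exact hzY hiY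
  have ea := two_eq (hA a ha) hia hza hiz
  obtain ⟨b, hb, hib⟩ := mB i hiY
  have hzb : z ∈ b := by
    obtain ⟨y, hy, hy'⟩ := meet (hX a ha b hb)
    grind
  obtain ⟨j, hjb, hjY⟩ := meet (hBY b hb)
  have hjz : j ≠ z := by rintro rfl; exact hzY hjY
  have hij : i ≠ j := by rintro rfl; exact hib hjb
  have eb := two_eq (hB b hb) hjb hzb hjz
  obtain ⟨k, hkY, hki, hkj⟩ : ∃ k ∈ Y, k ≠ i ∧ k ≠ j := by
    have : 0 < ((Y.erase i).erase j).card := by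
      have h1 := Finset.pred_card_le_card_erase (s := Y) (a := i)
      have h2 := Finset.pred_card_le_card_erase (s := Y.erase i) (a := j)
      omega
    obtain ⟨k, hk⟩ := Finset.card_pos.1 this
    exact ⟨k, by grind, by grind, by grind⟩
  have hkz : k ≠ z := by rintro rfl; exact hzY hkY
  have eY := three_eq hY hiY hjY hkY hij hki.symm hkj.symm
  have hsub : A.filter (j ∉ ·) ⊆ {{i, z}, {k, z}} := by
    intro c hc
    rw [Finset.mem_filter] at hc
    have hzc : z ∈ c := by
      obtain ⟨y, hy, hy'⟩ := meet (hX c hc.1 b hb)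
      grind
    obtain ⟨y, hy, hyY⟩ := meet (hAY c hc.1)
    have : y = i ∨ y = k := by grind
    rcases this with rfl | rfl
    · rw [two_eq (hA c hc.1) hy hzc hiz]; simp
    · rw [two_eq (hA c hc.1) hy hzc hkz]; simp
  have hle : ({{i, z}, {k, z}} : Finset (Finset V)).card ≤ 2 := Finset.card_le_two
  have hle' := Finset.card_le_card hsub
  have hs := split1 A j
  have hdj := dA j hjY
  have heq := Finset.eq_of_subset_of_card_le hsub (by omega)
  have hkA : ({k, z} : Finset V) ∈ A := by
    have : ({k, z} : Finset V) ∈ A.filter (j ∉ ·) := by rw [heq]; simp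
    exact (Finset.mem_filter.1 this).1
  have hB1 := miss_le_one hB hA hX' (x := j) (by omega)
  have hB2 : (B.filter (j ∈ ·)).card ≤ 1 := by
    rw [Finset.card_le_one]
    have key : ∀ c ∈ B.filter (j ∈ ·), c = {j, z} := by
      intro c hc
      rw [Finset.mem_filter] at hc
      obtain ⟨y, hy, hy'⟩ := meet (hX a ha c hc.1)
      obtain ⟨y2, hy2, hy2'⟩ := meet (hX _ hkA c hc.1)
      apply two_eq (hB c hc.1) hc.2 _ hjz
      by_contra hzc
      have e1 : y = i := by grind
      have e2 : y2 = k := by grind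
      subst e1 e2
      have := two_eq (hB c hc.1) hc.2 hy' hij.symm
      grind
    intro c hc c' hc'
    rw [key c hc, key c' hc']
  have := split1 B j
  omega

theorem Y {V : Type*} [DecidableEq V] {A B : Finset (Finset V)} {Y : Finset V}
    (hY : Y.card = 3)
    (hA : ∀ a ∈ A, a.card = 2) (hB : ∀ a ∈ B, a.card = 2)
    (hX : ∀ a ∈ A, ∀ b ∈ B, (a ∩ b).Nonempty)
    (hAY : ∀ a ∈ A, (a ∩ Y).Nonempty) (hBY : ∀ a ∈ B, (a ∩ Y).Nonempty)
    (dA : ∀ x ∈ Y, (A.filter (x ∈ ·)).card ≤ 2)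
    (dB : ∀ x ∈ Y, (B.filter (x ∈ ·)).card ≤ 2)
    (mA : ∀ x ∈ Y, ∃ b ∈ A, x ∉ b)
    (mB : ∀ x ∈ Y, ∃ b ∈ B, x ∉ b) : A.card + B.card ≤ 6 := by
  have hX' : ∀ b ∈ B, ∀ a ∈ A, (b ∩ a).Nonempty := fun b hb a ha => by
    rw [Finset.inter_comm]; exact hX a ha b hb
  by_cases h : 4 ≤ A.card
  · exact Y1 hY hA hB hX hAY hBY dA mB h
  by_cases h' : 4 ≤ B.card
  · have := Y1 hY hB hA hX' hBY hAY dB mA h'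
    omega
  omega

theorem Z1 {V : Type*} [DecidableEq V] {A B : Finset (Finset V)} {y y' d : V}
    (hA : ∀ a ∈ A, a.card = 2) (hB : ∀ a ∈ B, a.card = 2)
    (hX : ∀ a ∈ A, ∀ b ∈ B, (a ∩ b).Nonempty)
    (hAY : ∀ a ∈ A, d ∈ a ∨ y ∈ a ∨ y' ∈ a)
    (d1 : (A.filter (d ∈ ·)).card ≤ 2) (d2 : (A.filter (y ∈ ·)).card ≤ 1)
    (d3 : (A.filter (y' ∈ ·)).card ≤ 1)
    (dB : (B.filter (d ∈ ·)).card ≤ 2)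
    (h4 : 4 ≤ A.card) : B.card ≤ 2 := by
  have hX' : ∀ b ∈ B, ∀ a ∈ A, (b ∩ a).Nonempty := fun b hb a ha => by
    rw [Finset.inter_comm]; exact hX a ha b hb
  have h := cov3 hAY
  have hB1 := miss_le_one hB hA hX' (x := d) (by omega)
  have hs := split1 B d
  by_contra hlt
  have hA1 := miss_le_one hA hB hX (x := d) (by omega)
  have := split1 A d
  omega

theorem Z {V : Type*} [DecidableEq V] {A B : Finset (Finset V)} {y y' d : V}
    (hA : ∀ a ∈ A, a.card = 2) (hB : ∀ a ∈ B, a.card = 2)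
    (hX : ∀ a ∈ A, ∀ b ∈ B, (a ∩ b).Nonempty)
    (hAY : ∀ a ∈ A, d ∈ a ∨ y ∈ a ∨ y' ∈ a)
    (hBY : ∀ a ∈ B, d ∈ a ∨ y ∈ a ∨ y' ∈ a)
    (d1 : (A.filter (d ∈ ·)).card ≤ 2) (d2 : (A.filter (y ∈ ·)).card ≤ 1)
    (d3 : (A.filter (y' ∈ ·)).card ≤ 1)
    (e1 : (B.filter (d ∈ ·)).card ≤ 2) (e2 : (B.filter (y ∈ ·)).card ≤ 1)
    (e3 : (B.filter (y' ∈ ·)).card ≤ 1) : A.card + B.card ≤ 6 := by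
  have hX' : ∀ b ∈ B, ∀ a ∈ A, (b ∩ a).Nonempty := fun b hb a ha => by
    rw [Finset.inter_comm]; exact hX a ha b hb
  have h := cov3 hAY
  have h' := cov3 hBY
  by_cases h4 : 4 ≤ A.card
  · have := Z1 hA hB hX hAY d1 d2 d3 e1 h4
    omega
  by_cases h5 : 4 ≤ B.card
  · have := Z1 hB hA hX' hBY e1 e2 e3 d1 h5
    omega
  omega

def cod {V : Type*} [DecidableEq V] (F : Finset (Finset V)) (p q : V) : Finset (Finset V) :=
  F.filter (fun f => p ∈ f ∧ q ∈ f)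

def lnk {V : Type*} [DecidableEq V] (F : Finset (Finset V)) (p q : V) : Finset (Finset V) :=
  (F.filter (fun f => p ∈ f ∧ q ∉ f)).image (fun f => f.erase p)

theorem mem_lnk {V : Type*} [DecidableEq V] {F : Finset (Finset V)} {p q : V} {g : Finset V} :
    g ∈ lnk F p q ↔ ∃ f ∈ F, p ∈ f ∧ q ∉ f ∧ f.erase p = g := by
  simp [lnk, and_assoc]

theorem erase_inj {V : Type*} [DecidableEq V] {p : V} {f g : Finset V} (hf : p ∈ f) (hg : p ∈ g)
    (h : f.erase p = g.erase p) : f = g := by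
  rw [← Finset.insert_erase hf, ← Finset.insert_erase hg, h]

theorem card_lnk {V : Type*} [DecidableEq V] (F : Finset (Finset V)) (p q : V) :
    (lnk F p q).card = (F.filter (fun f => p ∈ f ∧ q ∉ f)).card := by
  apply Finset.card_image_of_injOn
  intro f hf g hg h
  simp only [Finset.coe_filter, Set.mem_ofPred_eq] at hf hg
  exact erase_inj hf.2.1 hg.2.1 h

theorem total {V : Type*} [DecidableEq V] (F : Finset (Finset V)) (p q : V) :
    F.card = (cod F p q).card + (lnk F p q).card + (lnk F q p).card
      + (F.filter (fun f => p ∉ f ∧ q ∉ f)).card := by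
  rw [card_lnk, card_lnk, cod]
  have h1 := Finset.card_filter_add_card_filter_not (s := F) (fun f => p ∈ f)
  have h2 := Finset.card_filter_add_card_filter_not (s := F.filter (fun f => p ∈ f)) (fun f => q ∈ f)
  have h3 := Finset.card_filter_add_card_filter_not (s := F.filter (fun f => ¬ p ∈ f)) (fun f => q ∈ f)
  simp only [Finset.filter_filter] at h2 h3
  have h4 : (F.filter (fun f => q ∈ f ∧ p ∉ f)) = (F.filter (fun f => p ∉ f ∧ q ∈ f)) := by
    ext f; simp; tauto
  rw [h4]
  omega

theorem lnk_two {V : Type*} [DecidableEq V] {F : Finset (Finset V)} (h3 : ∀ f ∈ F, f.card = 3)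
    {p q : V} : ∀ a ∈ lnk F p q, a.card = 2 := by
  intro a ha
  obtain ⟨f, hf, hp, hq, rfl⟩ := mem_lnk.1 ha
  rw [Finset.card_erase_of_mem hp, h3 f hf]

theorem lnk_cross {V : Type*} [DecidableEq V] {F : Finset (Finset V)}
    (hI : ∀ f ∈ F, ∀ g ∈ F, (f ∩ g).Nonempty)
    {p q : V} : ∀ a ∈ lnk F p q, ∀ b ∈ lnk F q p, (a ∩ b).Nonempty := by
  intro a ha b hb
  obtain ⟨f, hf, hp, hq, rfl⟩ := mem_lnk.1 ha
  obtain ⟨g, hg, hp', hq', rfl⟩ := mem_lnk.1 hb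
  obtain ⟨x, hx, hx'⟩ := meet (hI f hf g hg)
  exact ⟨x, by grind⟩

theorem lnk_deg_img {V : Type*} [DecidableEq V] (F : Finset (Finset V)) (p q x : V) :
    (lnk F p q).filter (x ∈ ·) ⊆ ((cod F p x).filter (q ∉ ·)).image (fun f => f.erase p) := by
  intro a ha
  rw [Finset.mem_filter] at ha
  obtain ⟨f, hf, hp, hq, rfl⟩ := mem_lnk.1 ha.1
  rw [Finset.mem_image]
  refine ⟨f, ?_, rfl⟩
  have := ha.2
  simp only [cod, Finset.mem_filter]
  grind

theorem lnk_deg {V : Type*} [DecidableEq V] (F : Finset (Finset V)) (p q x : V) :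
    ((lnk F p q).filter (x ∈ ·)).card ≤ (cod F p x).card :=
  (Finset.card_le_card (lnk_deg_img F p q x)).trans
    (Finset.card_image_le.trans (Finset.card_le_card (Finset.filter_subset _ _)))

theorem lnk_deg_self {V : Type*} [DecidableEq V] (F : Finset (Finset V)) (p q : V) :
    ((lnk F p q).filter (p ∈ ·)).card = 0 := by
  rw [Finset.card_eq_zero, Finset.filter_eq_empty_iff]
  intro a ha
  obtain ⟨f, hf, hp, hq, rfl⟩ := mem_lnk.1 ha
  simp

theorem lnk_deg_lt {V : Type*} [DecidableEq V] {F : Finset (Finset V)} {p q x : V} {f : Finset V}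
    (hf : f ∈ F) (hp : p ∈ f) (hq : q ∈ f) (hx : x ∈ f) :
    ((lnk F p q).filter (x ∈ ·)).card + 1 ≤ (cod F p x).card := by
  have h1 := (Finset.card_le_card (lnk_deg_img F p q x)).trans Finset.card_image_le
  have h2 : ((cod F p x).filter (q ∉ ·)).card < (cod F p x).card := by
    apply Finset.card_lt_card
    rw [Finset.filter_ssubset]
    exact ⟨f, by simp [cod, hf, hp, hx], by simpa using hq⟩
  omega

theorem cod_comm {V : Type*} [DecidableEq V] (F : Finset (Finset V)) (p q : V) :
    cod F p q = cod F q p := by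
  ext f; simp [cod]; tauto

/-- no pair cover -/
theorem no_pair {V : Type*} [DecidableEq V] {F : Finset (Finset V)} (h3 : ∀ f ∈ F, f.card = 3)
    (hI : ∀ f ∈ F, ∀ g ∈ F, (f ∩ g).Nonempty) (hF : 11 ≤ F.card)
    (h1 : ∀ x, ∃ f ∈ F, x ∉ f) (hc : ∀ p q, p ≠ q → (cod F p q).card ≤ 3)
    (p q : V) (hpq : p ≠ q) : ∃ f ∈ F, p ∉ f ∧ q ∉ f := by
  by_contra hcon
  push Not at hcon
  have hne : ∀ p q : V, (∀ f ∈ F, p ∉ f → q ∈ f) → (lnk F q p).Nonempty := by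
    intro p q h
    obtain ⟨f, hf, hpf⟩ := h1 p
    exact ⟨f.erase q, mem_lnk.2 ⟨f, hf, h f hf hpf, hpf, rfl⟩⟩
  have hd : ∀ p q x : V, ((lnk F p q).filter (x ∈ ·)).card ≤ 3 := by
    intro p q x
    by_cases h : p = x
    · subst h; rw [lnk_deg_self]; omega
    · exact (lnk_deg F p q x).trans (hc p x h)
  have := X (lnk_two h3) (lnk_two h3) (hne q p (by grind)) (hne p q hcon) (lnk_cross hI)
    (hd p q) (hd q p)
  have ht := total F p q
  have h0 : (F.filter (fun f => p ∉ f ∧ q ∉ f)).card = 0 := by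
    rw [Finset.card_eq_zero, Finset.filter_eq_empty_iff]
    intro f hf; have := hcon f hf; tauto
  have := hc p q hpq
  omega

theorem lnk_meets {V : Type*} [DecidableEq V] {F : Finset (Finset V)}
    (hI : ∀ f ∈ F, ∀ g ∈ F, (f ∩ g).Nonempty) {p q : V} {Y : Finset V} (hY : Y ∈ F)
    (hp : p ∉ Y) : ∀ a ∈ lnk F p q, (a ∩ Y).Nonempty := by
  intro a ha
  obtain ⟨f, hf, hpf, hq, rfl⟩ := mem_lnk.1 ha
  obtain ⟨x, hx, hx'⟩ := meet (hI f hf Y hY)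
  exact ⟨x, by grind⟩

/-- an edge missing `p, q` contains the third vertex of every edge on `p, q` -/
theorem third {V : Type*} [DecidableEq V] {F : Finset (Finset V)} (h3 : ∀ f ∈ F, f.card = 3)
    (hI : ∀ f ∈ F, ∀ g ∈ F, (f ∩ g).Nonempty) {p q : V} (hpq : p ≠ q) {Y : Finset V} (hY : Y ∈ F)
    (hp : p ∉ Y) (hq : q ∉ Y) : ∀ f ∈ cod F p q, ∃ y ∈ Y, f = {p, q, y} := by
  intro f hf
  simp only [cod, Finset.mem_filter] at hf
  obtain ⟨x, hx, hx'⟩ := meet (hI f hf.1 Y hY)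
  exact ⟨x, hx', three_eq (h3 f hf.1) hf.2.1 hf.2.2 hx hpq (by grind) (by grind)⟩

theorem PL {V : Type*} [DecidableEq V] {F : Finset (Finset V)} (h3 : ∀ f ∈ F, f.card = 3)
    (hI : ∀ f ∈ F, ∀ g ∈ F, (f ∩ g).Nonempty) (hF : 11 ≤ F.card)
    (h1 : ∀ x, ∃ f ∈ F, x ∉ f) : ∃ p q, p ≠ q ∧ 4 ≤ (cod F p q).card := by
  by_contra hcon
  have hc : ∀ p q, p ≠ q → (cod F p q).card ≤ 3 := by
    intro p q h
    by_contra h'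
    exact hcon ⟨p, q, h, by omega⟩
  have hnp := no_pair h3 hI hF h1 hc
  by_cases k3 : ∃ p q, p ≠ q ∧ 3 ≤ (cod F p q).card
  · obtain ⟨p, q, hpq, hk⟩ := k3
    obtain ⟨D, hD, hpD, hqD⟩ := hnp p q hpq
    -- the third vertices are exactly the vertices of any edge missing p, q
    have himg : ∀ Y ∈ F, p ∉ Y → q ∉ Y → ∀ y ∈ Y, ({p, q, y} : Finset V) ∈ F := by
      intro Y hY hp hq y hy
      have hsub : cod F p q ⊆ Y.image (fun y => {p, q, y}) := by
        intro f hf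
        obtain ⟨y, hy, rfl⟩ := third h3 hI hpq hY hp hq f hf
        exact Finset.mem_image_of_mem _ hy
      have hle : (Y.image (fun y => ({p, q, y} : Finset V))).card ≤ Y.card := Finset.card_image_le
      have heq := Finset.eq_of_subset_of_card_le hsub (by rw [h3 Y hY] at hle; omega)
      have : ({p, q, y} : Finset V) ∈ cod F p q := by
        rw [heq]; exact Finset.mem_image_of_mem _ hy
      exact (Finset.mem_filter.1 this).1
    have hD1 : (F.filter (fun f => p ∉ f ∧ q ∉ f)).card ≤ 1 := by
      rw [Finset.card_le_one]
      intro f hf g hg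
      rw [Finset.mem_filter] at hf hg
      apply Finset.eq_of_subset_of_card_le
      · intro y hy
        have := himg f hf.1 hf.2.1 hf.2.2 y hy
        obtain ⟨x, hx, hx'⟩ := meet (hI _ this g hg.1)
        grind
      · rw [h3 f hf.1, h3 g hg.1]
    have hlt : ∀ x ∈ D, ((lnk F p q).filter (x ∈ ·)).card ≤ 2 := by
      intro x hx
      have := lnk_deg_lt (F := F) (p := p) (q := q) (x := x) (himg D hD hpD hqD x hx)
        (by simp) (by simp) (by simp)
      have := hc p x (by grind)
      omega
    have hlt' : ∀ x ∈ D, ((lnk F q p).filter (x ∈ ·)).card ≤ 2 := by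
      intro x hx
      have := lnk_deg_lt (F := F) (p := q) (q := p) (x := x) (himg D hD hpD hqD x hx)
        (by simp) (by simp) (by simp)
      have := hc q x (by grind)
      omega
    have hm : ∀ u w : V, u ≠ w → (∀ f ∈ F, u ∉ f → w ∉ f → f = D) → w ∉ D → u ∉ D →
        ∀ x ∈ D, ∃ b ∈ lnk F u w, x ∉ b := by
      intro u w huw h hw hu x hx
      obtain ⟨f, hf, hwf, hxf⟩ := hnp w x (by grind)
      have huf : u ∈ f := by
        by_contra hh
        have := h f hf hh hwf
        grind
      exact ⟨f.erase u, mem_lnk.2 ⟨f, hf, huf, hwf, rfl⟩, by grind⟩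
    have huniq : ∀ f ∈ F, p ∉ f → q ∉ f → f = D := by
      intro f hf h h'
      exact Finset.card_le_one.1 hD1 f (by simp [hf, h, h']) D (by simp [hD, hpD, hqD])
    have := Y (h3 D hD) (lnk_two h3) (lnk_two h3) (lnk_cross hI) (lnk_meets hI hD hpD)
      (lnk_meets hI hD hqD) hlt hlt' (hm p q hpq huniq hqD hpD)
      (hm q p hpq.symm (fun f hf h h' => huniq f hf h' h) hpD hqD)
    have := total F p q
    have := hc p q hpq
    omega
  have hc2 : ∀ p q, p ≠ q → (cod F p q).card ≤ 2 := by
    intro p q h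
    by_contra h'
    exact k3 ⟨p, q, h, by omega⟩
  by_cases k2 : ∃ p q, p ≠ q ∧ 2 ≤ (cod F p q).card
  · obtain ⟨p, q, hpq, hk⟩ := k2
    obtain ⟨D, hD, hpD, hqD⟩ := hnp p q hpq
    obtain ⟨f, hf, g, hg, hfg⟩ := Finset.one_lt_card.1 hk
    obtain ⟨y, hyD, hyf⟩ := third h3 hI hpq hD hpD hqD f hf
    obtain ⟨y', hyD', hyg⟩ := third h3 hI hpq hD hpD hqD g hg
    have hyy : y ≠ y' := by rintro rfl; exact hfg (hyf.trans hyg.symm)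
    have hfF : f ∈ F := (Finset.mem_filter.1 hf).1
    have hgF : g ∈ F := (Finset.mem_filter.1 hg).1
    obtain ⟨d, hdD, hd1, hd2⟩ : ∃ k ∈ D, k ≠ y ∧ k ≠ y' := by
      have : 0 < ((D.erase y).erase y').card := by
        have h1 := Finset.pred_card_le_card_erase (s := D) (a := y)
        have h2 := Finset.pred_card_le_card_erase (s := D.erase y) (a := y')
        have := h3 D hD
        omega
      obtain ⟨k, hk⟩ := Finset.card_pos.1 this
      exact ⟨k, by grind, by grind, by grind⟩
    have eD := three_eq (h3 D hD) hdD hyD hyD' hd1 hd2 hyy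
    have hD2 : (F.filter (fun f => p ∉ f ∧ q ∉ f)).card ≤ 2 := by
      refine le_trans (Finset.card_le_card ?_) (hc2 y y' hyy)
      intro h hh
      rw [Finset.mem_filter] at hh
      obtain ⟨x, hx, hx'⟩ := meet (hI f hfF h hh.1)
      obtain ⟨x2, hx2, hx2'⟩ := meet (hI g hgF h hh.1)
      simp only [cod, Finset.mem_filter]
      grind
    have hmeet : ∀ u w : V, u ∉ D → ∀ a ∈ lnk F u w, d ∈ a ∨ y ∈ a ∨ y' ∈ a := by
      intro u w hu a ha
      obtain ⟨x, hx, hx'⟩ := meet (lnk_meets hI hD hu a ha)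
      grind
    have b1 := (lnk_deg F p q d).trans (hc2 p d (by grind))
    have b2 := (lnk_deg F q p d).trans (hc2 q d (by grind))
    have b3 := (lnk_deg_lt (F := F) (p := p) (q := q) (x := y) hfF (by grind) (by grind) (by grind)).trans (hc2 p y (by grind))
    have b4 := (lnk_deg_lt (F := F) (p := q) (q := p) (x := y) hfF (by grind) (by grind) (by grind)).trans (hc2 q y (by grind))
    have b5 := (lnk_deg_lt (F := F) (p := p) (q := q) (x := y') hgF (by grind) (by grind) (by grind)).trans (hc2 p y' (by grind))
    have b6 := (lnk_deg_lt (F := F) (p := q) (q := p) (x := y') hgF (by grind) (by grind) (by grind)).trans (hc2 q y' (by grind))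
    have := Z (lnk_two h3) (lnk_two h3) (lnk_cross hI) (hmeet p q hpD) (hmeet q p hqD)
      b1 (by omega) (by omega) b2 (by omega) (by omega)
    have := total F p q
    have := hc2 p q hpq
    omega
  have hc1 : ∀ p q, p ≠ q → (cod F p q).card ≤ 1 := by
    intro p q h
    by_contra h'
    exact k2 ⟨p, q, h, by omega⟩
  have hd : ∀ x, (F.filter (x ∈ ·)).card ≤ 3 := by
    intro x
    obtain ⟨g, hg, hxg⟩ := h1 x
    obtain ⟨a, b, c, hab, hac, hbc, rfl⟩ := Finset.card_eq_three.1 (h3 g hg)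
    have := cov3 (A := F.filter (x ∈ ·)) (x := a) (y := b) (z := c) (by
      intro f hf
      rw [Finset.mem_filter] at hf
      obtain ⟨y, hy, hy'⟩ := meet (hI f hf.1 _ hg)
      grind)
    simp only [Finset.filter_filter] at this
    have h1 := hc1 x a (by grind)
    have h2 := hc1 x b (by grind)
    have h3 := hc1 x c (by grind)
    unfold cod at h1 h2 h3
    omega
  obtain ⟨g, hg⟩ := Finset.card_pos.1 (show 0 < F.card by omega)
  obtain ⟨a, b, c, hab, hac, hbc, rfl⟩ := Finset.card_eq_three.1 (h3 g hg)
  have := cov3 (A := F) (x := a) (y := b) (z := c) (by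
    intro f hf
    obtain ⟨y, hy, hy'⟩ := meet (hI f hf _ hg)
    grind)
  have := hd a; have := hd b; have := hd c
  omega

def Hv {V : Type*} [DecidableEq V] (H : Finset (Finset V)) (a b c : V) : Prop :=
  4 ≤ (H.filter (fun e => a ∈ e ∧ b ∈ e ∧ c ∈ e)).card

theorem Hv.swap {V : Type*} [DecidableEq V] {H : Finset (Finset V)} {a b c : V}
    (h : Hv H a b c) : Hv H b a c := by
  unfold Hv at *
  refine h.trans (Finset.card_le_card fun e he => ?_)
  rw [Finset.mem_filter] at he ⊢
  tauto

theorem Hv.rot {V : Type*} [DecidableEq V] {H : Finset (Finset V)} {a b c : V}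
    (h : Hv H a b c) : Hv H b c a := by
  unfold Hv at *
  refine h.trans (Finset.card_le_card fun e he => ?_)
  rw [Finset.mem_filter] at he ⊢
  tauto

theorem other {V : Type*} [DecidableEq V] {H : Finset (Finset V)}
    (hfree : ∀ e ∈ H, ∀ f ∈ H, e ≠ f → (e ∩ f).card ≠ 1) {e f : Finset V} (he : e ∈ H)
    (hf : f ∈ H) (hef : e ≠ f) {t : V} (hte : t ∈ e) (htf : t ∈ f) :
    ∃ s, s ≠ t ∧ s ∈ e ∧ s ∈ f := by
  have h1 := hfree e he f hf hef
  have h2 : 0 < (e ∩ f).card := Finset.card_pos.2 ⟨t, by grind⟩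
  obtain ⟨s, hs, hst⟩ := Finset.exists_mem_ne (s := e ∩ f) (by omega) t
  exact ⟨s, hst, by grind, by grind⟩

theorem four_eq {V : Type*} [DecidableEq V] {a : Finset V} (h : a.card = 4) {x y z w : V}
    (hx : x ∈ a) (hy : y ∈ a) (hz : z ∈ a) (hw : w ∈ a)
    (hxy : x ≠ y) (hxz : x ≠ z) (hxw : x ≠ w) (hyz : y ≠ z) (hyw : y ≠ w) (hzw : z ≠ w) :
    a = {x, y, z, w} := by
  symm
  apply Finset.eq_of_subset_of_card_le
  · intro z hz; grind
  · rw [h, Finset.card_insert_of_notMem (by grind),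
      Finset.card_eq_three.2 ⟨y, z, w, hyz, hyw, hzw, rfl⟩]

/-- An edge containing `a` and hitting all heavy edges outside `a b c` is impossible. -/
theorem Hv.contra {V : Type*} [DecidableEq V] {H : Finset (Finset V)}
    (hu : ∀ e ∈ H, e.card = 4) {a b c : V} (hab : a ≠ b) (hac : a ≠ c) (hbc : b ≠ c)
    (h : Hv H a b c) {f : Finset V} (hf : f.card = 4) (haf : a ∈ f)
    (hh : ∀ e ∈ H, a ∈ e → b ∈ e → c ∈ e → ∃ s ∈ f, s ≠ a ∧ s ≠ b ∧ s ≠ c ∧ s ∈ e) : False := by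
  have hsub : H.filter (fun e => a ∈ e ∧ b ∈ e ∧ c ∈ e) ⊆
      (f.erase a).image (fun s => {a, b, c, s}) := by
    intro e he
    rw [Finset.mem_filter] at he
    obtain ⟨he, ha, hb, hc⟩ := he
    obtain ⟨s, hsf, h1, h2, h3, hse⟩ := hh e he ha hb hc
    rw [Finset.mem_image]
    exact ⟨s, by grind, (four_eq (hu e he) ha hb hc hse hab hac h1.symm hbc h2.symm h3.symm).symm⟩
  have h1 := Finset.card_le_card hsub
  have h2 : ((f.erase a).image (fun s => ({a, b, c, s} : Finset V))).card ≤ (f.erase a).card :=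
    Finset.card_image_le
  rw [Finset.card_erase_of_mem haf, hf] at h2
  unfold Hv at h
  omega

theorem Hv.K {V : Type*} [DecidableEq V] {H : Finset (Finset V)}
    (hu : ∀ e ∈ H, e.card = 4) (hfree : ∀ e ∈ H, ∀ f ∈ H, e ≠ f → (e ∩ f).card ≠ 1)
    {a b c : V} (hab : a ≠ b) (hac : a ≠ c) (hbc : b ≠ c)
    (h : Hv H a b c) {f : Finset V} (hf : f ∈ H) (haf : a ∈ f) : b ∈ f ∨ c ∈ f := by
  by_contra hcon
  push Not at hcon
  apply Hv.contra hu hab hac hbc h (hu f hf) haf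
  intro e he ha hb hc
  obtain ⟨s, h1, h2, h3⟩ := other hfree he hf (by rintro rfl; exact hcon.1 hb) ha haf
  exact ⟨s, h3, h1, by grind, by grind, h2⟩

theorem Hv.M {V : Type*} [DecidableEq V] {H : Finset (Finset V)}
    (hu : ∀ e ∈ H, e.card = 4) (hfree : ∀ e ∈ H, ∀ f ∈ H, e ≠ f → (e ∩ f).card ≠ 1)
    {a b c r r' : V} (hab : a ≠ b) (hac : a ≠ c) (hbc : b ≠ c) (hra : r ≠ a) (hrb : r ≠ b)
    (hrc : r ≠ c) (hra' : r' ≠ a) (hrb' : r' ≠ b) (hrc' : r' ≠ c) (hrr : r ≠ r')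
    (h : Hv H a b r) (h' : Hv H a c r') : False := by
  have hsub : H.filter (fun e => a ∈ e ∧ c ∈ e ∧ r' ∈ e) ⊆ {{a, c, r', b}, {a, c, r', r}} := by
    intro e he
    rw [Finset.mem_filter] at he
    obtain ⟨he, ha, hc, hr⟩ := he
    rcases Hv.K hu hfree hab hra.symm hrb.symm h he ha with hb | hb
    · rw [four_eq (hu e he) ha hc hr hb hac hra'.symm hab hrc'.symm hbc.symm hrb']; simp
    · rw [four_eq (hu e he) ha hc hr hb hac hra'.symm hra.symm hrc'.symm hrc.symm hrr.symm]; simp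
  have h1 := Finset.card_le_card hsub
  have h2 : ({{a, c, r', b}, {a, c, r', r}} : Finset (Finset V)).card ≤ 2 := Finset.card_le_two
  unfold Hv at h'
  omega

theorem Hv.opt {V : Type*} [DecidableEq V] {H : Finset (Finset V)}
    (hu : ∀ e ∈ H, e.card = 4) (hfree : ∀ e ∈ H, ∀ f ∈ H, e ≠ f → (e ∩ f).card ≠ 1)
    (hdeg : ∀ v : V, 11 ≤ (H.filter (fun e => v ∈ e)).card)
    {a b c r : V} (hab : a ≠ b) (hac : a ≠ c) (hbc : b ≠ c)
    (hra : r ≠ a) (hrb : r ≠ b) (hrc : r ≠ c)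
    (h : Hv H a b c) {g : Finset V} (hg : g ∈ H) (ha : a ∈ g) (hb : b ∈ g) (hc : c ∈ g)
    (hr : r ∈ g) : Hv H a b r ∨ Hv H a c r ∨ Hv H b c r := by
  by_contra hcon
  have eg := four_eq (hu g hg) ha hb hc hr hab hac hra.symm hbc hrb.symm hrc.symm
  have key : ∀ e ∈ H, r ∈ e → (a ∈ e ∧ b ∈ e) ∨ (a ∈ e ∧ c ∈ e) ∨ (b ∈ e ∧ c ∈ e) := by
    intro e he hre
    by_cases heg : e = g
    · subst heg; exact Or.inl ⟨ha, hb⟩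
    obtain ⟨s, h1, h2, h3⟩ := other hfree he hg heg hre hr
    rw [eg] at h3
    have : s = a ∨ s = b ∨ s = c := by grind
    rcases this with rfl | rfl | rfl
    · have := Hv.K hu hfree hab hac hbc h he h2; tauto
    · have := Hv.K hu hfree hab.symm hbc hac h.swap he h2; tauto
    · have := Hv.K hu hfree hac.symm hbc.symm hab h.rot.rot he h2; tauto
  have hsub : H.filter (fun e => r ∈ e) ⊆
      (H.filter (fun e => a ∈ e ∧ b ∈ e ∧ r ∈ e) ∪ H.filter (fun e => a ∈ e ∧ c ∈ e ∧ r ∈ e)) ∪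
      H.filter (fun e => b ∈ e ∧ c ∈ e ∧ r ∈ e) := by
    intro e he
    rw [Finset.mem_filter] at he
    have := key e he.1 he.2
    simp only [Finset.mem_union, Finset.mem_filter]
    tauto
  have h1 := Finset.card_le_card hsub
  have h2 := Finset.card_union_le (H.filter (fun e => a ∈ e ∧ b ∈ e ∧ r ∈ e) ∪
    H.filter (fun e => a ∈ e ∧ c ∈ e ∧ r ∈ e)) (H.filter (fun e => b ∈ e ∧ c ∈ e ∧ r ∈ e))
  have h3 := Finset.card_union_le (H.filter (fun e => a ∈ e ∧ b ∈ e ∧ r ∈ e))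
    (H.filter (fun e => a ∈ e ∧ c ∈ e ∧ r ∈ e))
  have := hdeg r
  unfold Hv at hcon
  omega

theorem Hv.N {V : Type*} [DecidableEq V] {H : Finset (Finset V)}
    (hu : ∀ e ∈ H, e.card = 4) (hfree : ∀ e ∈ H, ∀ f ∈ H, e ≠ f → (e ∩ f).card ≠ 1)
    (hdeg : ∀ v : V, 11 ≤ (H.filter (fun e => v ∈ e)).card)
    {a b c r : V} (hab : a ≠ b) (hac : a ≠ c) (hbc : b ≠ c)
    (hra : r ≠ a) (hrb : r ≠ b) (hrc : r ≠ c)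
    (h : Hv H a b c) (hr : Hv H a b r) {f : Finset V} (hf : f ∈ H) (haf : a ∈ f) : b ∈ f := by
  by_contra hbf
  apply Hv.contra hu hab hac hbc h (hu f hf) haf
  intro e he ha hb hc
  obtain ⟨s, hs⟩ : (((e.erase a).erase b).erase c).Nonempty := by
    rw [← Finset.card_pos, Finset.card_erase_of_mem (by grind), Finset.card_erase_of_mem (by grind),
      Finset.card_erase_of_mem (by grind), hu e he]
    norm_num
  have hsa : s ≠ a := by grind
  have hsb : s ≠ b := by grind
  have hsc : s ≠ c := by grind
  have hse : s ∈ e := by grind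
  refine ⟨s, ?_, hsa, hsb, hsc, hse⟩
  have hv : Hv H a b s := by
    by_cases hsr : r = s
    · subst hsr; exact hr
    rcases Hv.opt hu hfree hdeg hab hac hbc hsa hsb hsc h he ha hb hc hse with h1 | h1 | h1
    · exact h1
    · exact (Hv.M hu hfree hab hac hbc hra hrb hrc hsa hsb hsc hsr hr h1).elim
    · exact (Hv.M hu hfree hab.symm hbc hac hrb hra hrc hsb hsa hsc hsr hr.swap h1).elim
  exact (Hv.K hu hfree hab hsa.symm hsb.symm hv hf haf).resolve_left hbf

theorem partner {V : Type*} [DecidableEq V] {H : Finset (Finset V)}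
    (hu : ∀ e ∈ H, e.card = 4) (hfree : ∀ e ∈ H, ∀ f ∈ H, e ≠ f → (e ∩ f).card ≠ 1)
    (hdeg : ∀ v : V, 11 ≤ (H.filter (fun e => v ∈ e)).card) (v : V) :
    ∃ w, w ≠ v ∧ ∀ e ∈ H, v ∈ e → w ∈ e := by
  by_contra hcon
  push Not at hcon
  set F := (H.filter (fun e => v ∈ e)).image (fun e => e.erase v) with hFdef
  have memF : ∀ g, g ∈ F ↔ ∃ e ∈ H, v ∈ e ∧ e.erase v = g := by
    intro g; simp [hFdef, and_assoc]
  have hFc : 11 ≤ F.card := by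
    rw [hFdef, Finset.card_image_of_injOn]
    · exact hdeg v
    · intro f hf g hg h
      simp only [Finset.coe_filter, Set.mem_ofPred_eq] at hf hg
      exact erase_inj hf.2 hg.2 h
  have h3 : ∀ f ∈ F, f.card = 3 := by
    intro f hf
    obtain ⟨e, he, hve, rfl⟩ := (memF f).1 hf
    rw [Finset.card_erase_of_mem hve, hu e he]
  have hI : ∀ f ∈ F, ∀ g ∈ F, (f ∩ g).Nonempty := by
    intro f hf g hg
    by_cases hfg : f = g
    · subst hfg
      rw [Finset.inter_self, ← Finset.card_pos, h3 f hf]; norm_num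
    obtain ⟨e, he, hve, rfl⟩ := (memF f).1 hf
    obtain ⟨e', he', hve', rfl⟩ := (memF g).1 hg
    obtain ⟨s, h1, h2, h3⟩ := other hfree he he' (by rintro rfl; exact hfg rfl) hve hve'
    exact ⟨s, by grind⟩
  have h1 : ∀ x, ∃ f ∈ F, x ∉ f := by
    intro x
    by_cases hx : x = v
    · subst hx
      obtain ⟨f, hf⟩ := Finset.card_pos.1 (show 0 < F.card by omega)
      obtain ⟨e, he, hve, rfl⟩ := (memF f).1 hf
      exact ⟨_, hf, by simp⟩
    · obtain ⟨e, he, hve, hxe⟩ := hcon x hx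
      exact ⟨e.erase v, (memF _).2 ⟨e, he, hve, rfl⟩, by grind⟩
  obtain ⟨p, q, hpq, hk⟩ := PL h3 hI hFc h1
  obtain ⟨f, hf⟩ := Finset.card_pos.1 (show 0 < (cod F p q).card by omega)
  simp only [cod, Finset.mem_filter] at hf
  obtain ⟨hf, hpf, hqf⟩ := hf
  obtain ⟨e, he, hve, rfl⟩ := (memF f).1 hf
  have hvp : v ≠ p := by grind
  have hvq : v ≠ q := by grind
  have hpe : p ∈ e := by grind
  have hqe : q ∈ e := by grind
  have hv : Hv H v p q := by
    have hsub : cod F p q ⊆ (H.filter (fun e => v ∈ e ∧ p ∈ e ∧ q ∈ e)).image (fun e => e.erase v) := by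
      intro g hg
      simp only [cod, Finset.mem_filter] at hg
      obtain ⟨hg, hpg, hqg⟩ := hg
      obtain ⟨e', he', hve', rfl⟩ := (memF g).1 hg
      rw [Finset.mem_image]
      refine ⟨e', ?_, rfl⟩
      rw [Finset.mem_filter]
      grind
    have := (Finset.card_le_card hsub).trans Finset.card_image_le
    unfold Hv
    omega
  obtain ⟨s, hs⟩ : (((e.erase v).erase p).erase q).Nonempty := by
    rw [← Finset.card_pos, Finset.card_erase_of_mem (by grind), Finset.card_erase_of_mem (by grind),
      Finset.card_erase_of_mem (by grind), hu e he]
    norm_num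
  have hsa : s ≠ v := by grind
  have hsb : s ≠ p := by grind
  have hsc : s ≠ q := by grind
  have hse : s ∈ e := by grind
  rcases Hv.opt hu hfree hdeg hvp hvq hpq hsa hsb hsc hv he hve hpe hqe hse with h | h | h
  · obtain ⟨e', he', hve', hn⟩ := hcon p hvp.symm
    exact hn (Hv.N hu hfree hdeg hvp hvq hpq hsa hsb hsc hv h he' hve')
  · obtain ⟨e', he', hve', hn⟩ := hcon q hvq.symm
    exact hn (Hv.N hu hfree hdeg hvq hvp hpq.symm hsa hsc hsb hv.rot.rot.swap h he' hve')
  · obtain ⟨e', he', hve', hn⟩ := hcon p hvp.symm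
    rcases Hv.K hu hfree hvp hvq hpq hv he' hve' with h' | h'
    · exact hn h'
    · exact hn (Hv.N hu hfree hdeg hpq.symm hvq.symm hvp.symm hsc hsb hsa hv.rot.swap h.swap he' h')

/-- In a `P^4_2`-free 4-uniform hypergraph with minimum degree at least 11,
the signature of every edge consists either of exactly two disjoint 2-element
sets, or of one 2-element set together with 3-element sets each containing
that 2-element set. -/
theorem stmt_12 {V : Type*} [Fintype V] [DecidableEq V]
    (H : Finset (Finset V))
    (huniform : ∀ e ∈ H, e.card = 4)
    (hfree : ∀ e ∈ H, ∀ f ∈ H, e ≠ f → (e ∩ f).card ≠ 1)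
    (hdeg : ∀ v : V, 11 ≤ (H.filter (fun e => v ∈ e)).card) :
    ∀ e ∈ H,
      (∃ d₁ d₂ : Finset V, d₁.card = 2 ∧ d₂.card = 2 ∧ Disjoint d₁ d₂ ∧
        InSig H e d₁ ∧ InSig H e d₂ ∧
        (∀ f ∈ H, f ≠ e → (e ∩ f).Nonempty → e ∩ f = d₁ ∨ e ∩ f = d₂)) ∨
      (∃ d : Finset V, d.card = 2 ∧ InSig H e d ∧
        (∀ f ∈ H, f ≠ e → (e ∩ f).Nonempty →
          e ∩ f = d ∨ ((e ∩ f).card = 3 ∧ d ⊆ e ∩ f))) := by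
  choose π hπ hcl using partner huniform hfree hdeg
  intro e he
  have he4 := huniform e he
  have hcard : ∀ f ∈ H, f ≠ e → (e ∩ f).Nonempty → (e ∩ f).card = 2 ∨ (e ∩ f).card = 3 := by
    intro f hf hfe hne
    have h1 := hfree e he f hf hfe.symm
    have h0 := Finset.card_pos.2 hne
    have h5 : (e ∩ f).card ≤ 4 := he4 ▸ Finset.card_le_card Finset.inter_subset_left
    have h4 : (e ∩ f).card ≠ 4 := by
      intro h
      have h6 : e ∩ f = e := Finset.eq_of_subset_of_card_le Finset.inter_subset_left (by omega)
      have h7 : e ∩ f = f := Finset.eq_of_subset_of_card_le Finset.inter_subset_right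
        (by have := huniform f hf; omega)
      exact hfe (h7.symm.trans h6)
    omega
  obtain ⟨f, hf, hfe, hf2⟩ : ∃ f ∈ H, f ≠ e ∧ (e ∩ f).card = 2 := by
    by_contra hcon
    push Not at hcon
    obtain ⟨a, ha⟩ := Finset.card_pos.1 (show 0 < e.card by omega)
    obtain ⟨f, hf, hfe⟩ := Finset.exists_mem_ne (s := H.filter (fun e => a ∈ e))
      (by have := hdeg a; omega) e
    rw [Finset.mem_filter] at hf
    have hf3 := (hcard f hf.1 hfe ⟨a, by grind⟩).resolve_left (hcon f hf.1 hfe)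
    have hd := Finset.card_inter_add_card_sdiff f e
    rw [Finset.inter_comm, hf3, huniform f hf.1] at hd
    obtain ⟨x, hx⟩ := Finset.card_eq_one.1 (show (f \ e).card = 1 by omega)
    have hxf : ∀ y, y ∈ f ∧ y ∉ e ↔ y = x := by
      intro y; rw [← Finset.mem_sdiff, hx, Finset.mem_singleton]
    obtain ⟨hx1, hx2⟩ := (hxf x).2 rfl
    have hsub : H.filter (fun e => x ∈ e) ⊆ e.image (fun y => insert x (e.erase y)) := by
      intro g hg
      rw [Finset.mem_filter] at hg
      obtain ⟨hg, hxg⟩ := hg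
      have hge : g ≠ e := by rintro rfl; exact hx2 hxg
      have hne : (e ∩ g).Nonempty := by
        by_cases hgf : g = f
        · subst hgf; exact ⟨a, by grind⟩
        obtain ⟨s, h1, h2, h3⟩ := other hfree hg hf.1 hgf hxg hx1
        have : s ∈ e := by
          by_contra hh
          exact h1 ((hxf s).1 ⟨h3, hh⟩)
        exact ⟨s, by grind⟩
      have hg3 := (hcard g hg hge hne).resolve_left (hcon g hg hge)
      have hd := Finset.card_inter_add_card_sdiff e g
      rw [hg3, he4] at hd
      obtain ⟨y, hy⟩ := Finset.card_eq_one.1 (show (e \ g).card = 1 by omega)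
      have hye : ∀ z, z ∈ e ∧ z ∉ g ↔ z = y := by
        intro z; rw [← Finset.mem_sdiff, hy, Finset.mem_singleton]
      obtain ⟨hy1, hy2⟩ := (hye y).2 rfl
      rw [Finset.mem_image]
      refine ⟨y, hy1, ?_⟩
      apply Finset.eq_of_subset_of_card_le
      · intro z hz
        by_cases hzx : z = x
        · subst hzx; exact hxg
        have hz' : z ∈ e ∧ z ≠ y := by grind
        by_contra hh
        exact hz'.2 ((hye z).1 ⟨hz'.1, hh⟩)
      · rw [Finset.card_insert_of_notMem (by grind), Finset.card_erase_of_mem hy1, he4,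
          huniform g hg]
    have h1 := (Finset.card_le_card hsub).trans Finset.card_image_le
    have := hdeg x
    omega
  -- a closed doubleton is contained in any signature set it meets
  have hmeet : ∀ f ∈ H, f ≠ e → (e ∩ f).card = 2 → ∀ g ∈ H,
      (∃ x, x ∈ e ∩ f ∧ x ∈ e ∩ g) → e ∩ f ⊆ e ∩ g := by
    intro f hf hfe hf2 g hg hx
    obtain ⟨x, hx, hx'⟩ := hx
    rw [Finset.mem_inter] at hx hx'
    have h1 : π x ∈ e ∩ f := Finset.mem_inter.2 ⟨hcl x e he hx.1, hcl x f hf hx.2⟩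
    rw [two_eq hf2 (Finset.mem_inter.2 hx) h1 (hπ x).symm]
    have h2 : π x ∈ e ∩ g := Finset.mem_inter.2 ⟨hcl x e he hx.1, hcl x g hg hx'.2⟩
    intro y hy
    grind
  by_cases hg : ∃ g ∈ H, g ≠ e ∧ e ∩ g = e \ (e ∩ f)
  · obtain ⟨g, hg, hge, hgs⟩ := hg
    left
    have hg2 : (e ∩ g).card = 2 := by
      rw [hgs, Finset.card_sdiff_of_subset Finset.inter_subset_left, he4, hf2]
    refine ⟨e ∩ f, e ∩ g, hf2, hg2, ?_, ⟨f, hf, hfe, rfl⟩, ⟨g, hg, hge, rfl⟩, ?_⟩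
    · rw [hgs]; exact Finset.disjoint_sdiff
    · intro h hh hhe hne
      have hc := hcard h hh hhe hne
      by_cases c1 : ∃ x, x ∈ e ∩ f ∧ x ∈ e ∩ h
      · have s1 := hmeet f hf hfe hf2 h hh c1
        by_cases c2 : ∃ x, x ∈ e ∩ g ∧ x ∈ e ∩ h
        · have s2 := hmeet g hg hge hg2 h hh c2
          have : e ⊆ e ∩ h := by
            intro y hy
            by_cases hyf : y ∈ e ∩ f
            · exact s1 hyf
            · exact s2 (by rw [hgs]; exact Finset.mem_sdiff.2 ⟨hy, hyf⟩)
          have := Finset.card_le_card this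
          omega
        · left
          apply Finset.Subset.antisymm _ s1
          intro y hy
          by_contra hyf
          exact c2 ⟨y, by rw [hgs]; exact Finset.mem_sdiff.2 ⟨(Finset.mem_inter.1 hy).1, hyf⟩, hy⟩
      · right
        rw [hgs]
        have : e ∩ h ⊆ e \ (e ∩ f) := by
          intro y hy
          exact Finset.mem_sdiff.2 ⟨(Finset.mem_inter.1 hy).1, fun hyf => c1 ⟨y, hyf, hy⟩⟩
        apply Finset.eq_of_subset_of_card_le this
        rw [← hgs]; omega
  · right
    refine ⟨e ∩ f, hf2, ⟨f, hf, hfe, rfl⟩, ?_⟩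
    intro h hh hhe hne
    have hc := hcard h hh hhe hne
    by_cases c1 : ∃ x, x ∈ e ∩ f ∧ x ∈ e ∩ h
    · have s1 := hmeet f hf hfe hf2 h hh c1
      rcases hc with hc | hc
      · left; exact (Finset.eq_of_subset_of_card_le s1 (by omega)).symm
      · right; exact ⟨hc, s1⟩
    · exfalso
      apply hg
      refine ⟨h, hh, hhe, ?_⟩
      have : e ∩ h ⊆ e \ (e ∩ f) := by
        intro y hy
        exact Finset.mem_sdiff.2 ⟨(Finset.mem_inter.1 hy).1, fun hyf => c1 ⟨y, hyf, hy⟩⟩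
      apply Finset.eq_of_subset_of_card_le this
      rw [Finset.card_sdiff_of_subset Finset.inter_subset_left, he4, hf2]
      omega
end

section
/- For n \ge 9, the maximum number of edges in a 3-uniform hypergraph on n vertices with no loose path of length three is at most \binom{n-1}{2}, with the bound attained by the full star (all triples containing a fixed vertex). -/
/-- `H` contains no loose path of length three. -/
def P33Free {V : Type*} [DecidableEq V] (H : Finset (Finset V)) : Prop :=
  ¬ ∃ e₁ e₂ e₃ : Finset V, e₁ ∈ H ∧ e₂ ∈ H ∧ e₃ ∈ H ∧
    (e₁ ∪ e₂ ∪ e₃).card = 7 ∧ (e₁ ∩ e₂).card = 1 ∧ (e₂ ∩ e₃).card = 1 ∧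
    e₁ ∩ e₃ = ∅

namespace LP

variable {V : Type*} [DecidableEq V]

lemma noP {H : Finset (Finset V)} (h3 : ∀ e ∈ H, e.card = 3) (hP : P33Free H)
    {e₁ e₂ e₃ : Finset V} (h1 : e₁ ∈ H) (h2 : e₂ ∈ H) (h3' : e₃ ∈ H)
    (h12 : (e₁ ∩ e₂).card = 1) (h23 : (e₂ ∩ e₃).card = 1) (h13 : e₁ ∩ e₃ = ∅) : False := by
  apply hP
  refine ⟨e₁, e₂, e₃, h1, h2, h3', ?_, h12, h23, h13⟩
  have a := Finset.card_union_add_card_inter e₁ e₂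
  have b := Finset.card_union_add_card_inter (e₁ ∪ e₂) e₃
  have c : (e₁ ∪ e₂) ∩ e₃ = e₂ ∩ e₃ := by
    rw [Finset.union_inter_distrib_right, h13, Finset.empty_union]
  rw [c] at b
  have := h3 _ h1
  have := h3 _ h2
  have := h3 _ h3'
  omega

lemma noP7 {H : Finset (Finset V)} (h3 : ∀ e ∈ H, e.card = 3) (hP : P33Free H)
    {e₁ e₂ e₃ : Finset V} (m1 : e₁ ∈ H) (m2 : e₂ ∈ H) (m3 : e₃ ∈ H)
    (a b c d e f g : V) (h1 : e₁ = {a, b, c}) (h2 : e₂ = {c, d, e}) (hh3 : e₃ = {e, f, g})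
    (nd : [a, b, c, d, e, f, g].Nodup) : False := by
  subst h1 h2 hh3
  simp only [List.nodup_cons, List.mem_cons, not_or, List.not_mem_nil] at nd
  apply noP h3 hP m1 m2 m3
  · rw [Finset.card_eq_one]; exact ⟨c, by ext z; simp; grind⟩
  · rw [Finset.card_eq_one]; exact ⟨e, by ext z; simp; grind⟩
  · ext z; simp; grind

def Tri (H : Finset (Finset V)) (x1 x2 x3 y1 y2 y3 : V) : Prop :=
  [x1, x2, x3, y1, y2, y3].Nodup ∧ {x2, x3, y1} ∈ H ∧ {x1, x3, y2} ∈ H ∧ {x1, x2, y3} ∈ H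

lemma Tri.rot {H : Finset (Finset V)} {x1 x2 x3 y1 y2 y3 : V}
    (T : Tri H x1 x2 x3 y1 y2 y3) : Tri H x2 x3 x1 y2 y3 y1 := by
  obtain ⟨nd, a, b, c⟩ := T
  refine ⟨by simp at nd ⊢; grind, ?_, ?_, ?_⟩
  · convert b using 1; grind
  · convert c using 1; grind
  · convert a using 1

lemma Tri.swap {H : Finset (Finset V)} {x1 x2 x3 y1 y2 y3 : V}
    (T : Tri H x1 x2 x3 y1 y2 y3) : Tri H x2 x1 x3 y2 y1 y3 := by
  obtain ⟨nd, a, b, c⟩ := T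
  refine ⟨by simp at nd ⊢; grind, ?_, ?_, ?_⟩
  · convert b using 1
  · convert a using 1
  · convert c using 1; grind

section tri
variable {H : Finset (Finset V)} {x1 x2 x3 y1 y2 y3 : V}

lemma Tri.one_x (h3 : ∀ e ∈ H, e.card = 3) (hP : P33Free H)
    (T : Tri H x1 x2 x3 y1 y2 y3) {p q : V} (hpq : p ≠ q)
    (hp : p ∉ [x1, x2, x3, y1, y2, y3]) (hq : q ∉ [x1, x2, x3, y1, y2, y3])
    (h : {x1, p, q} ∈ H) : False := by
  obtain ⟨nd, a, b, c⟩ := T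
  refine noP7 h3 hP h b a p q x1 y2 x3 x2 y1 (by grind) (by grind) (by grind) ?_
  simp at *; grind

lemma Tri.one_y (h3 : ∀ e ∈ H, e.card = 3) (hP : P33Free H)
    (T : Tri H x1 x2 x3 y1 y2 y3) {p q : V} (hpq : p ≠ q)
    (hp : p ∉ [x1, x2, x3, y1, y2, y3]) (hq : q ∉ [x1, x2, x3, y1, y2, y3])
    (h : {y1, p, q} ∈ H) : False := by
  obtain ⟨nd, a, b, c⟩ := T
  refine noP7 h3 hP h a b p q y1 x2 x3 x1 y2 (by grind) (by grind) (by grind) ?_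
  simp at *; grind

lemma Tri.yy (h3 : ∀ e ∈ H, e.card = 3) (hP : P33Free H)
    (T : Tri H x1 x2 x3 y1 y2 y3) {w : V}
    (hw : w ∉ [x1, x2, x3, y1, y2, y3]) (h : {w, y1, y2} ∈ H) : False := by
  obtain ⟨nd, a, b, c⟩ := T
  refine noP7 h3 hP h a c w y2 y1 x3 x2 x1 y3 (by grind) (by grind) (by grind) ?_
  simp at *; grind

lemma Tri.xy (h3 : ∀ e ∈ H, e.card = 3) (hP : P33Free H)
    (T : Tri H x1 x2 x3 y1 y2 y3) {w : V}
    (hw : w ∉ [x1, x2, x3, y1, y2, y3]) (h : {w, x1, y2} ∈ H) : False := by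
  obtain ⟨nd, a, b, c⟩ := T
  refine noP7 h3 hP h c a w y2 x1 y3 x2 x3 y1 (by grind) (by grind) (by grind) ?_
  simp at *; grind

/-- The allowed pairs. -/
def pairs (x1 x2 x3 y1 y2 y3 : V) : Finset (Finset V) :=
  {{x1, x2}, {x1, x3}, {x2, x3}, {x1, y1}, {x2, y2}, {x3, y3}}

def pairs3 (x1 x2 x3 : V) : Finset (Finset V) :=
  {{x1, x2}, {x1, x3}, {x2, x3}}

lemma Tri.good (h3 : ∀ e ∈ H, e.card = 3) (hP : P33Free H)
    (T : Tri H x1 x2 x3 y1 y2 y3) {w u u' : V}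
    (hw : w ∉ [x1, x2, x3, y1, y2, y3]) (hu : u ∈ [x1, x2, x3, y1, y2, y3])
    (hu' : u' ∈ [x1, x2, x3, y1, y2, y3]) (huu : u ≠ u') (h : {w, u, u'} ∈ H) :
    ({u, u'} : Finset V) ∈ pairs x1 x2 x3 y1 y2 y3 := by
  have c : ∀ p q : V, ({w, p, q} : Finset V) = {w, q, p} := by intro p q; grind
  have c' : ∀ p q : V, ({p, q} : Finset V) = {q, p} := by intro p q; grind
  have T2 := T.rot
  have T3 := T2.rot
  have T4 := T.swap
  have T5 := T2.swap
  have T6 := T3.swap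
  have hw' : w ≠ x1 ∧ w ≠ x2 ∧ w ≠ x3 ∧ w ≠ y1 ∧ w ≠ y2 ∧ w ≠ y3 := by simpa using hw
  have hw2 : w ∉ [x2, x3, x1, y2, y3, y1] := by simp; grind
  have hw3 : w ∉ [x3, x1, x2, y3, y1, y2] := by simp; grind
  have hw4 : w ∉ [x2, x1, x3, y2, y1, y3] := by simp; grind
  have hw5 : w ∉ [x3, x2, x1, y3, y2, y1] := by simp; grind
  have hw6 : w ∉ [x1, x3, x2, y1, y3, y2] := by simp; grind
  have f1 := fun h => T.yy h3 hP hw h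
  have f2 := fun h => T2.yy h3 hP hw2 h
  have f3 := fun h => T3.yy h3 hP hw3 h
  have f1' := fun h => T4.yy h3 hP hw4 h
  have f2' := fun h => T5.yy h3 hP hw5 h
  have f3' := fun h => T6.yy h3 hP hw6 h
  have g1 := fun h => T.xy h3 hP hw h
  have g2 := fun h => T2.xy h3 hP hw2 h
  have g3 := fun h => T3.xy h3 hP hw3 h
  have g1' := fun h => T4.xy h3 hP hw4 h
  have g2' := fun h => T5.xy h3 hP hw5 h
  have g3' := fun h => T6.xy h3 hP hw6 h
  have k1 := fun h => g1 ((c _ _) ▸ h)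
  have k2 := fun h => g2 ((c _ _) ▸ h)
  have k3 := fun h => g3 ((c _ _) ▸ h)
  have k4 := fun h => g1' ((c _ _) ▸ h)
  have k5 := fun h => g2' ((c _ _) ▸ h)
  have k6 := fun h => g3' ((c _ _) ▸ h)
  simp only [List.mem_cons, List.not_mem_nil, or_false] at hu hu'
  unfold pairs
  rcases hu with rfl | rfl | rfl | rfl | rfl | rfl <;>
  rcases hu' with rfl | rfl | rfl | rfl | rfl | rfl <;>
  first
  | exact absurd rfl huu
  | (exfalso
     first | exact f1 h | exact f2 h | exact f3 h | exact f1' h | exact f2' h | exact f3' h | exact g1 h | exact g2 h | exact g3 h | exact g1' h | exact g2' h | exact g3' h | exact k1 h | exact k2 h | exact k3 h | exact k4 h | exact k5 h | exact k6 h)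
  | (simp only [Finset.mem_insert, Finset.mem_singleton, true_or, or_true]; done)
  | (rw [c' u u']; simp only [Finset.mem_insert, Finset.mem_singleton, true_or, or_true]; done)

lemma Tri.sep_xx (h3 : ∀ e ∈ H, e.card = 3) (hP : P33Free H)
    (T : Tri H x1 x2 x3 y1 y2 y3) {w p q : V} (nd2 : [w, p, q].Nodup)
    (hw : w ∉ [x1, x2, x3, y1, y2, y3])
    (hp : p ∉ [x1, x2, x3, y1, y2, y3]) (hq : q ∉ [x1, x2, x3, y1, y2, y3])
    (h : {w, x1, x2} ∈ H) (hf : {w, p, q} ∈ H) : False := by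
  obtain ⟨nd, a, b, c⟩ := T
  refine noP7 h3 hP hf h b p q w x2 x1 x3 y2 (by grind) (by grind) (by grind) ?_
  simp at *; grind

lemma Tri.sep_xy (h3 : ∀ e ∈ H, e.card = 3) (hP : P33Free H)
    (T : Tri H x1 x2 x3 y1 y2 y3) {w p q : V} (nd2 : [w, p, q].Nodup)
    (hw : w ∉ [x1, x2, x3, y1, y2, y3])
    (hp : p ∉ [x1, x2, x3, y1, y2, y3]) (hq : q ∉ [x1, x2, x3, y1, y2, y3])
    (h : {w, x1, y1} ∈ H) (hf : {w, p, q} ∈ H) : False := by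
  obtain ⟨nd, a, b, c⟩ := T
  refine noP7 h3 hP hf h b p q w y1 x1 x3 y2 (by grind) (by grind) (by grind) ?_
  simp at *; grind

lemma Tri.noyyy (h3 : ∀ e ∈ H, e.card = 3) (hP : P33Free H)
    (T : Tri H x1 x2 x3 y1 y2 y3) {w : V}
    (hw : w ∉ [x1, x2, x3, y1, y2, y3])
    (h : {w, x1, x2} ∈ H) : {y1, y2, y3} ∉ H := by
  intro hf
  obtain ⟨nd, a, b, c⟩ := T
  refine noP7 h3 hP h a hf w x1 x2 x3 y1 y2 y3 (by grind) (by grind) (by grind) ?_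
  simp at *; grind

lemma Tri.compl (h3 : ∀ e ∈ H, e.card = 3) (hP : P33Free H)
    (T : Tri H x1 x2 x3 y1 y2 y3) {w : V}
    (hw : w ∉ [x1, x2, x3, y1, y2, y3])
    (h : {w, x1, y1} ∈ H) {s t : Finset V} (hs : s ∈ H) (ht : t ∈ H)
    (hst : Disjoint s t) (hU : s ∪ t = {x1, x2, x3, y1, y2, y3}) : False := by
  obtain ⟨nd, a, b, c⟩ := T
  have q1 : ({x2, y2, y3} : Finset V) ∉ H := by
    intro hf
    refine noP7 h3 hP h b hf w y1 x1 x3 y2 x2 y3 (by grind) (by grind) (by grind) ?_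
    simp at *; grind
  have q2 : ({x2, x3, y3} : Finset V) ∉ H := by
    intro hf
    refine noP7 h3 hP h b hf w y1 x1 y2 x3 x2 y3 (by grind) (by grind) (by grind) ?_
    simp at *; grind
  have q3 : ({x3, y2, y3} : Finset V) ∉ H := by
    intro hf
    refine noP7 h3 hP h c hf w y1 x1 x2 y3 x3 y2 (by grind) (by grind) (by grind) ?_
    simp at *; grind
  have q4 : ({x2, x3, y2} : Finset V) ∉ H := by
    intro hf
    refine noP7 h3 hP h c hf w y1 x1 y3 x2 x3 y2 (by grind) (by grind) (by grind) ?_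
    simp at *; grind
  -- no edge of H inside the four others
  have key : ∀ r ∈ H, r ⊆ {x2, x3, y2, y3} → False := by
    intro r hr hrs
    have hc := h3 r hr
    simp only [List.nodup_cons, List.mem_cons, not_or, List.not_mem_nil] at nd
    have hcard : ({x2, x3, y2, y3} : Finset V).card = 4 := by
      have : [x2, x3, y2, y3].Nodup := by simp; grind
      have := List.toFinset_card_of_nodup this
      simpa using this
    have : r ∈ ({x2, x3, y2, y3} : Finset V).powersetCard 3 := by
      simp [Finset.mem_powersetCard, hrs, hc]
    have h1 : (({x2, x3, y2, y3} : Finset V) \ r).card = 1 := by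
      rw [Finset.card_sdiff_of_subset hrs]; omega
    obtain ⟨z, hz⟩ := Finset.card_eq_one.1 h1
    have hr' : r = ({x2, x3, y2, y3} : Finset V).erase z := by
      rw [Finset.erase_eq, ← hz, Finset.sdiff_sdiff_eq_self hrs]
    have hz' : z ∈ ({x2, x3, y2, y3} : Finset V) := by
      have : z ∈ ({x2, x3, y2, y3} : Finset V) \ r := by rw [hz]; simp
      exact (Finset.mem_sdiff.1 this).1
    simp only [Finset.mem_insert, Finset.mem_singleton] at hz'
    rcases hz' with rfl | rfl | rfl | rfl
    · apply q3; convert hr; rw [hr']; grind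
    · apply q1; convert hr; rw [hr']; grind
    · apply q2; convert hr; rw [hr']; grind
    · apply q4; convert hr; rw [hr']; grind
  have sub : ∀ r r' : Finset V, r ∪ r' = {x1, x2, x3, y1, y2, y3} → x1 ∉ r → y1 ∉ r →
      r ⊆ {x2, x3, y2, y3} := by
    intro r r' hrr h1 h2 z hz
    have : z ∈ ({x1, x2, x3, y1, y2, y3} : Finset V) := by
      rw [← hrr]; exact Finset.mem_union_left _ hz
    simp only [Finset.mem_insert, Finset.mem_singleton] at this ⊢
    grind
  have main : ∀ s t : Finset V, s ∈ H → t ∈ H → Disjoint s t →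
      s ∪ t = {x1, x2, x3, y1, y2, y3} → x1 ∈ s → False := by
    intro s t hs ht hst hU hx
    have hxt : x1 ∉ t := Finset.disjoint_left.1 hst hx
    by_cases hy : y1 ∈ t
    · have hys : y1 ∉ s := fun h => Finset.disjoint_left.1 hst h hy
      have hws : w ∉ s ∪ t := by rw [hU]; simpa using hw
      simp only [Finset.mem_union, not_or] at hws
      simp only [List.nodup_cons, List.mem_cons, not_or, List.not_mem_nil] at nd
      refine noP h3 hP hs h ht ?_ ?_ (Finset.disjoint_iff_inter_eq_empty.1 hst)
      · rw [Finset.card_eq_one]; exact ⟨x1, by ext z; simp; grind⟩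
      · rw [Finset.card_eq_one]; exact ⟨y1, by ext z; simp; grind⟩
    · exact key t ht (sub t s (by rw [Finset.union_comm, hU]) hxt hy)
  have hx : x1 ∈ s ∪ t := by rw [hU]; simp
  rcases Finset.mem_union.1 hx with hx | hx
  · exact main s t hs ht hst hU hx
  · exact main t s ht hs hst.symm (by rw [Finset.union_comm, hU]) hx

end tri

def Bd (n h : ℕ) : Prop := 2 * h ≤ n * (n + 1) ∧ (9 ≤ n → 2 * h ≤ (n - 1) * (n - 2))

lemma arithA {n h m r W l a b : ℕ} (hn : n = 6 + W + r) (hh : h ≤ a + m + b)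
    (hm : m ≤ W * l) (hb : 2 * b ≤ r * (r + 1))
    (hc : (W = 0 ∧ a ≤ 20) ∨ (1 ≤ W ∧ a ≤ 10 ∧ l = 6) ∨ (1 ≤ W ∧ a ≤ 19 ∧ l = 3)) : Bd n h := by
  have e1 : n - 1 = 5 + W + r := by omega
  have e2 : n - 2 = 4 + W + r := by omega
  unfold Bd
  rw [e1, e2]
  subst hn
  rcases hc with ⟨h1, h2⟩ | ⟨h1, h2, h3⟩ | ⟨h1, h2, h3⟩
  · subst h1
    exact ⟨by nlinarith, fun h9 => by nlinarith⟩
  · subst h3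
    refine ⟨by nlinarith, fun h9 => ?_⟩
    rcases Nat.lt_or_ge W 3 with h | h
    · interval_cases W <;> nlinarith
    · nlinarith
  · subst h3
    refine ⟨?_, fun h9 => ?_⟩
    · rcases Nat.lt_or_ge W 3 with h | h
      · interval_cases W <;> nlinarith
      · nlinarith
    rcases Nat.lt_or_ge W 3 with h | h
    · interval_cases W <;> nlinarith
    · nlinarith

lemma mid_form {U e : Finset V} (he : e.card = 3) (h2 : (e ∩ U).card = 2) :
    ∃ w u u', w ∉ U ∧ u ∈ U ∧ u' ∈ U ∧ u ≠ u' ∧ e = {w, u, u'} ∧ e ∩ U = {u, u'} := by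
  obtain ⟨u, u', huu, hu⟩ := Finset.card_eq_two.1 h2
  have h1 : (e \ U).card = 1 := by
    have := Finset.card_sdiff_add_card_inter e U
    omega
  obtain ⟨w, hw⟩ := Finset.card_eq_one.1 h1
  have hw' : w ∈ e \ U := by rw [hw]; simp
  have a1 : u ∈ e ∩ U := by rw [hu]; simp
  have a2 : u' ∈ e ∩ U := by rw [hu]; simp
  refine ⟨w, u, u', (Finset.mem_sdiff.1 hw').2, (Finset.mem_inter.1 a1).2,
    (Finset.mem_inter.1 a2).2, huu, ?_, hu⟩
  rw [← Finset.sdiff_union_inter e U, hw, hu]; rfl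

lemma one_form {U e : Finset V} (he : e.card = 3) (h2 : (e ∩ U).card = 1) :
    ∃ u p q, u ∈ U ∧ p ∉ U ∧ q ∉ U ∧ p ≠ q ∧ e = {u, p, q} := by
  obtain ⟨u, hu⟩ := Finset.card_eq_one.1 h2
  have h1 : (e \ U).card = 2 := by
    have := Finset.card_sdiff_add_card_inter e U
    omega
  obtain ⟨p, q, hpq, hw⟩ := Finset.card_eq_two.1 h1
  have a1 : u ∈ e ∩ U := by rw [hu]; simp
  have a2 : p ∈ e \ U := by rw [hw]; simp
  have a3 : q ∈ e \ U := by rw [hw]; simp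
  refine ⟨u, p, q, (Finset.mem_inter.1 a1).2, (Finset.mem_sdiff.1 a2).2, (Finset.mem_sdiff.1 a3).2,
    hpq, ?_⟩
  rw [← Finset.sdiff_union_inter e U, hw, hu, Finset.union_comm]; rfl

lemma mem_form {e : Finset V} (he : e.card = 3) {w : V} (hw : w ∈ e) :
    ∃ p q, [w, p, q].Nodup ∧ e = {w, p, q} := by
  have h1 : (e.erase w).card = 2 := by rw [Finset.card_erase_of_mem hw, he]
  obtain ⟨p, q, hpq, h⟩ := Finset.card_eq_two.1 h1
  have a2 : p ∈ e.erase w := by rw [h]; simp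
  have a3 : q ∈ e.erase w := by rw [h]; simp
  refine ⟨p, q, ?_, ?_⟩
  · simp at a2 a3 ⊢; grind
  · rw [← Finset.insert_erase hw, h]

lemma compl_count {U : Finset V} (hU : U.card = 6) {A : Finset (Finset V)}
    (hA : ∀ s ∈ A, s ⊆ U ∧ s.card = 3) (hd : ∀ s ∈ A, U \ s ∉ A) : A.card ≤ 10 := by
  have h1 : (A.image (fun s => U \ s)).card = A.card := by
    apply Finset.card_image_of_injOn
    intro s hs t ht hst
    simp only at hst
    rw [← Finset.sdiff_sdiff_eq_self (hA s hs).1, hst, Finset.sdiff_sdiff_eq_self (hA t ht).1]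
  have h2 : Disjoint A (A.image (fun s => U \ s)) := by
    rw [Finset.disjoint_right]
    intro t ht
    obtain ⟨s, hs, rfl⟩ := Finset.mem_image.1 ht
    exact hd s hs
  have h3 : A ∪ A.image (fun s => U \ s) ⊆ U.powersetCard 3 := by
    intro t ht
    rw [Finset.mem_powersetCard]
    rcases Finset.mem_union.1 ht with ht | ht
    · exact hA t ht
    · obtain ⟨s, hs, rfl⟩ := Finset.mem_image.1 ht
      refine ⟨Finset.sdiff_subset, ?_⟩
      rw [Finset.card_sdiff_of_subset (hA s hs).1, hU, (hA s hs).2]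
  have h4 := Finset.card_le_card h3
  rw [Finset.card_union_of_disjoint h2, h1, Finset.card_powersetCard, hU] at h4
  have : Nat.choose 6 3 = 20 := by decide
  omega

section
variable {H : Finset (Finset V)} {x1 x2 x3 y1 y2 y3 : V}

lemma pairs_sub {p : Finset V} (hp : p ∈ pairs x1 x2 x3 y1 y2 y3) :
    p ⊆ {x1, x2, x3, y1, y2, y3} := by
  intro z hz
  simp only [pairs, Finset.mem_insert, Finset.mem_singleton] at hp
  rcases hp with rfl | rfl | rfl | rfl | rfl | rfl <;>
    (simp only [Finset.mem_insert, Finset.mem_singleton] at hz ⊢; tauto)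

lemma perm_a (a b c : V) : ({a, c, b} : Finset V) = {a, b, c} := by grind
lemma perm_b (a b c : V) : ({b, c, a} : Finset V) = {a, b, c} := by grind
lemma last3 (a b c x y z : V) : ({a, b, c} : Finset V) ⊆ {x, y, z, a, b, c} := by grind
lemma nodup_last (a b c x y z : V) (h : [x, y, z, a, b, c].Nodup) : [a, b, c].Nodup := by
  simp at h ⊢; grind

set_option maxHeartbeats 4000000 in
lemma caseA (X : Finset V) (hX : ∀ e ∈ H, e ⊆ X)
    (h3 : ∀ e ∈ H, e.card = 3) (hP : P33Free H)
    (ih : ∀ Y : Finset V, Y.card < X.card →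
      2 * (H.filter (· ⊆ Y)).card ≤ Y.card * (Y.card + 1))
    (T : Tri H x1 x2 x3 y1 y2 y3) : Bd X.card H.card := by
  set U : Finset V := {x1, x2, x3, y1, y2, y3} with hUdef
  have memU : ∀ z, z ∈ U ↔ z ∈ [x1, x2, x3, y1, y2, y3] := by intro z; simp [hUdef]
  have U2 : U = {x2, x3, x1, y2, y3, y1} := by rw [hUdef]; grind
  have U3 : U = {x3, x1, x2, y3, y1, y2} := by rw [hUdef]; grind
  have m2 : ∀ z, z ∈ U ↔ z ∈ [x2, x3, x1, y2, y3, y1] := by intro z; simp [U2]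
  have m3 : ∀ z, z ∈ U ↔ z ∈ [x3, x1, x2, y3, y1, y2] := by intro z; simp [U3]
  have U6 : U = {x1, x3, x2, y1, y3, y2} := by rw [hUdef]; grind
  have m6 : ∀ z, z ∈ U ↔ z ∈ [x1, x3, x2, y1, y3, y2] := by intro z; simp [U6]
  have T2 := T.rot
  have T3 := T2.rot
  have T6 := T3.swap
  have hU6 : U.card = 6 := by
    have := List.toFinset_card_of_nodup T.1
    simpa [hUdef] using this
  have hUX : U ⊆ X := by
    have a := hX _ T.2.1
    have b := hX _ T.2.2.1
    have c := hX _ T.2.2.2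
    intro z hz
    simp only [hUdef, Finset.mem_insert, Finset.mem_singleton] at hz
    rcases hz with rfl | rfl | rfl | rfl | rfl | rfl
    · exact b (by simp)
    · exact a (by simp)
    · exact a (by simp)
    · exact a (by simp)
    · exact b (by simp)
    · exact c (by simp)
  set W := (X \ U).filter (fun w => ∃ e ∈ H, w ∈ e ∧ (e ∩ U).card = 2) with hW
  set R := (X \ U) \ W with hR
  set HU := H.filter (· ⊆ U) with hHU
  set HM := H.filter (fun e => (e ∩ U).card = 2) with hHM
  set HR := H.filter (· ⊆ R) with hHR
  have hWs : W ⊆ X \ U := Finset.filter_subset _ _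
  have cX : (X \ U).card = X.card - 6 := by rw [Finset.card_sdiff_of_subset hUX, hU6]
  have cX6 : 6 ≤ X.card := hU6 ▸ Finset.card_le_card hUX
  have cR : R.card = (X \ U).card - W.card := by rw [hR, Finset.card_sdiff_of_subset hWs]
  have cW := Finset.card_le_card hWs
  have hn : X.card = 6 + W.card + R.card := by omega
  -- good pairs
  have good : ∀ e ∈ H, (e ∩ U).card = 2 → ∃ w p, w ∈ W ∧ w ∉ U ∧ p ∈ pairs x1 x2 x3 y1 y2 y3 ∧
      e = insert w p := by
    intro e he h2
    obtain ⟨w, u, u', hw, hu, hu', huu, rfl, -⟩ := mid_form (h3 e he) h2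
    refine ⟨w, {u, u'}, ?_, hw, ?_, rfl⟩
    · rw [hW, Finset.mem_filter, Finset.mem_sdiff]
      exact ⟨⟨hX _ he (by simp), hw⟩, _, he, by simp, h2⟩
    · exact T.good h3 hP ((memU _).not.1 hw) ((memU _).1 hu) ((memU _).1 hu') huu he
  have one : ∀ e ∈ H, (e ∩ U).card ≠ 1 := by
    intro e he h1
    obtain ⟨u, p, q, hu, hp, hq, hpq, rfl⟩ := one_form (h3 e he) h1
    have hu' := hu
    simp only [hUdef, Finset.mem_insert, Finset.mem_singleton] at hu'
    rcases hu' with rfl | rfl | rfl | rfl | rfl | rfl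
    · exact T.one_x h3 hP hpq ((memU _).not.1 hp) ((memU _).not.1 hq) he
    · exact T2.one_x h3 hP hpq ((m2 _).not.1 hp) ((m2 _).not.1 hq) he
    · exact T3.one_x h3 hP hpq ((m3 _).not.1 hp) ((m3 _).not.1 hq) he
    · exact T.one_y h3 hP hpq ((memU _).not.1 hp) ((memU _).not.1 hq) he
    · exact T2.one_y h3 hP hpq ((m2 _).not.1 hp) ((m2 _).not.1 hq) he
    · exact T3.one_y h3 hP hpq ((m3 _).not.1 hp) ((m3 _).not.1 hq) he
  have sep : ∀ f ∈ H, f ∩ U = ∅ → ∀ w ∈ W, w ∉ f := by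
    intro f hf hfU w hw hwf
    rw [hW, Finset.mem_filter, Finset.mem_sdiff] at hw
    obtain ⟨⟨hwX, hwU⟩, e, he, hwe, he2⟩ := hw
    obtain ⟨w', p, hw', hwU', hp, rfl⟩ := good e he he2
    obtain ⟨p', q', nd, rfl⟩ := mem_form (h3 f hf) hwf
    have hp' : p' ∉ U := fun h => by
      have : p' ∈ ({w, p', q'} : Finset V) ∩ U := by simp [h]
      rw [hfU] at this; simp at this
    have hq' : q' ∉ U := fun h => by
      have : q' ∈ ({w, p', q'} : Finset V) ∩ U := by simp [h]
      rw [hfU] at this; simp at this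
    have hpU : p ⊆ U := by
      rw [hUdef]; exact pairs_sub hp
    have hww : w = w' := by
      rcases Finset.mem_insert.1 hwe with h | h
      · exact h
      · exact absurd (hpU h) hwU
    subst hww
    simp only [pairs, Finset.mem_insert, Finset.mem_singleton] at hp
    rcases hp with rfl | rfl | rfl | rfl | rfl | rfl
    · exact T.sep_xx h3 hP nd ((memU _).not.1 hwU) ((memU _).not.1 hp') ((memU _).not.1 hq') he hf
    · exact T6.sep_xx h3 hP nd ((m6 _).not.1 hwU) ((m6 _).not.1 hp') ((m6 _).not.1 hq') he hf
    · exact T2.sep_xx h3 hP nd ((m2 _).not.1 hwU) ((m2 _).not.1 hp') ((m2 _).not.1 hq') he hf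
    · exact T.sep_xy h3 hP nd ((memU _).not.1 hwU) ((memU _).not.1 hp') ((memU _).not.1 hq') he hf
    · exact T2.sep_xy h3 hP nd ((m2 _).not.1 hwU) ((m2 _).not.1 hp') ((m2 _).not.1 hq') he hf
    · exact T3.sep_xy h3 hP nd ((m3 _).not.1 hwU) ((m3 _).not.1 hp') ((m3 _).not.1 hq') he hf
  have cover : H ⊆ HU ∪ HM ∪ HR := by
    intro e he
    have c := h3 e he
    have c1 := one e he
    have c2 : (e ∩ U).card ≤ 3 := c ▸ Finset.card_le_card Finset.inter_subset_left
    by_cases k2 : (e ∩ U).card = 2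
    · simp [hHM, he, k2]
    by_cases k3 : (e ∩ U).card = 3
    · have : e ∩ U = e := Finset.eq_of_subset_of_card_le Finset.inter_subset_left (by omega)
      have : e ⊆ U := by rw [← this]; exact Finset.inter_subset_right
      simp [hHU, he, this]
    have k0 : e ∩ U = ∅ := by rw [← Finset.card_eq_zero]; omega
    have : e ⊆ R := by
      intro z hz
      rw [hR, Finset.mem_sdiff, Finset.mem_sdiff]
      refine ⟨⟨hX e he hz, fun hzU => ?_⟩, fun hzW => sep e he k0 z hzW hz⟩
      have : z ∈ e ∩ U := Finset.mem_inter.2 ⟨hz, hzU⟩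
      rw [k0] at this; simp at this
    simp [hHR, he, this]
  have hh : H.card ≤ HU.card + HM.card + HR.card :=
    (Finset.card_le_card cover).trans ((Finset.card_union_le _ _).trans
      (Nat.add_le_add_right (Finset.card_union_le _ _) _))
  have hb := ih R (by omega)
  have hUs : HU ⊆ U.powersetCard 3 := by
    intro e he
    rw [hHU, Finset.mem_filter] at he
    exact Finset.mem_powersetCard.2 ⟨he.2, h3 e he.1⟩
  have c20 : (U.powersetCard 3).card = 20 := by rw [Finset.card_powersetCard, hU6]; decide
  have img : ∀ P : Finset (Finset V), (∀ e ∈ H, (e ∩ U).card = 2 → ∃ w p, w ∈ W ∧ p ∈ P ∧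
      e = insert w p) → HM.card ≤ W.card * P.card := by
    intro P h
    rw [← Finset.card_product]
    refine (Finset.card_le_card (t := (W ×ˢ P).image (fun x => insert x.1 x.2)) ?_).trans
      Finset.card_image_le
    intro e he
    rw [hHM, Finset.mem_filter] at he
    obtain ⟨w, p, hw, hp, rfl⟩ := h e he.1 he.2
    exact Finset.mem_image.2 ⟨(w, p), Finset.mem_product.2 ⟨hw, hp⟩, rfl⟩
  by_cases hxy : ∃ w, w ∉ U ∧ w ∈ W ∧ ({w, x1, y1} ∈ H ∨ {w, x2, y2} ∈ H ∨ {w, x3, y3} ∈ H)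
  · obtain ⟨w, hwU, hwW, hw⟩ := hxy
    have h10 : HU.card ≤ 10 := by
      apply compl_count hU6
      · intro s hs; exact Finset.mem_powersetCard.1 (hUs hs)
      · intro s hs hs'
        rw [hHU, Finset.mem_filter] at hs hs'
        have hd : Disjoint s (U \ s) := Finset.disjoint_sdiff
        have hu : s ∪ (U \ s) = U := Finset.union_sdiff_of_subset hs.2
        rcases hw with hw | hw | hw
        · exact T.compl h3 hP ((memU _).not.1 hwU) hw hs.1 hs'.1 hd hu
        · exact T2.compl h3 hP ((m2 _).not.1 hwU) hw hs.1 hs'.1 hd (hu.trans U2)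
        · exact T3.compl h3 hP ((m3 _).not.1 hwU) hw hs.1 hs'.1 hd (hu.trans U3)
    have hm : HM.card ≤ W.card * 6 := by
      refine (img (pairs x1 x2 x3 y1 y2 y3) ?_).trans (Nat.mul_le_mul_left _ Finset.card_le_six)
      intro e he h2
      obtain ⟨w, p, a, b, c, d⟩ := good e he h2
      exact ⟨w, p, a, c, d⟩
    exact arithA hn hh hm hb (Or.inr (Or.inl ⟨Finset.card_pos.2 ⟨w, hwW⟩, h10, rfl⟩))
  · have good' : ∀ e ∈ H, (e ∩ U).card = 2 → ∃ w p, w ∈ W ∧ w ∉ U ∧ p ∈ pairs3 x1 x2 x3 ∧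
        e = insert w p := by
      intro e he h2
      obtain ⟨w, p, a, b, c, rfl⟩ := good e he h2
      refine ⟨w, p, a, b, ?_, rfl⟩
      simp only [pairs, pairs3, Finset.mem_insert, Finset.mem_singleton] at c ⊢
      push Not at hxy
      obtain ⟨k1, k2, k3⟩ := hxy w b a
      rcases c with rfl | rfl | rfl | rfl | rfl | rfl
      · simp
      · simp
      · simp
      · exact absurd he k1
      · exact absurd he k2
      · exact absurd he k3
    have hm : HM.card ≤ W.card * 3 := by
      refine (img (pairs3 x1 x2 x3) ?_).trans (Nat.mul_le_mul_left _ Finset.card_le_three)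
      intro e he h2
      obtain ⟨w, p, a, b, c, d⟩ := good' e he h2
      exact ⟨w, p, a, c, d⟩
    refine arithA hn hh hm hb ?_
    rcases Nat.eq_zero_or_pos W.card with h0 | hpos
    · exact Or.inl ⟨h0, c20 ▸ Finset.card_le_card hUs⟩
    · refine Or.inr (Or.inr ⟨hpos, ?_, rfl⟩)
      obtain ⟨w, hw⟩ := Finset.card_pos.1 hpos
      rw [hW, Finset.mem_filter] at hw
      obtain ⟨-, e, he, -, he2⟩ := hw
      obtain ⟨w', p, a, b, c, rfl⟩ := good' e he he2
      have hy : ({y1, y2, y3} : Finset V) ∉ H := by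
        simp only [pairs3, Finset.mem_insert, Finset.mem_singleton] at c
        rcases c with rfl | rfl | rfl
        · exact T.noyyy h3 hP ((memU _).not.1 b) he
        · have := T6.noyyy h3 hP ((m6 _).not.1 b) he
          intro h; apply this; rwa [perm_a]
        · have := T2.noyyy h3 hP ((m2 _).not.1 b) he
          intro h; apply this; rwa [perm_b]
      have hsub : HU ⊆ (U.powersetCard 3).erase {y1, y2, y3} := by
        intro e he
        refine Finset.mem_erase.2 ⟨?_, hUs he⟩
        rintro rfl
        exact hy (Finset.mem_filter.1 he).1
      have hin : ({y1, y2, y3} : Finset V) ∈ U.powersetCard 3 := by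
        rw [Finset.mem_powersetCard]
        have nd := T.1
        refine ⟨last3 _ _ _ _ _ _, ?_⟩
        have : [y1, y2, y3].Nodup := nodup_last _ _ _ _ _ _ nd
        have := List.toFinset_card_of_nodup this
        simpa using this
      have := Finset.card_le_card hsub
      rw [Finset.card_erase_of_mem hin, c20] at this
      exact this
end

section
variable {H : Finset (Finset V)}

lemma mem2_form {e : Finset V} (he : e.card = 3) {a b : V} (hab : a ≠ b) (ha : a ∈ e) (hb : b ∈ e) :
    ∃ z, z ≠ a ∧ z ≠ b ∧ e = {a, b, z} := by
  obtain ⟨p, q, nd, rfl⟩ := mem_form he ha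
  simp at nd hb
  rcases hb with rfl | rfl | rfl
  · exact absurd rfl hab
  · exact ⟨q, by grind, by grind, rfl⟩
  · exact ⟨p, by grind, by grind, by grind⟩

lemma star (h3 : ∀ e ∈ H, e.card = 3) (hP : P33Free H)
    (hC : ∀ x1 x2 x3 y1 y2 y3, ¬ Tri H x1 x2 x3 y1 y2 y3) {v a b c d : V} {g : Finset V}
    (nd : [v, a, b, c, d].Nodup) (h1 : {v, a, b} ∈ H) (h2 : {v, c, d} ∈ H) (hg : g ∈ H)
    (hv : v ∉ g) (ha : a ∈ g) (hb : b ∉ g) : c ∈ g ∧ d ∈ g := by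
  simp only [List.nodup_cons, List.mem_cons, not_or, List.not_mem_nil] at nd
  have aux : ∀ c d, v ≠ c → v ≠ d → a ≠ c → a ≠ d → b ≠ c → b ≠ d → c ≠ d →
      {v, c, d} ∈ H → c ∈ g → d ∈ g := by
    intro c d k1 k2 k3 k4 k5 k6 k7 h2 hc
    by_contra hd
    obtain ⟨z, hz1, hz2, rfl⟩ := mem2_form (h3 g hg) k3 ha hc
    refine hC v a c z d b ⟨?_, hg, h2, h1⟩
    simp at hv hb hd ⊢
    grind
  by_cases hc : c ∈ g
  · exact ⟨hc, aux c d (by grind) (by grind) (by grind) (by grind) (by grind) (by grind) (by grind)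
      h2 hc⟩
  by_cases hd : d ∈ g
  · have h2' : {v, d, c} ∈ H := by rwa [perm_a]
    exact ⟨aux d c (by grind) (by grind) (by grind) (by grind) (by grind) (by grind) (by grind)
      h2' hd, hd⟩
  exfalso
  refine noP h3 hP hg h1 h2 ?_ ?_ ?_
  · rw [Finset.card_eq_one]; exact ⟨a, by ext z; simp; grind⟩
  · rw [Finset.card_eq_one]; exact ⟨v, by ext z; simp; grind⟩
  · ext z; simp; grind

lemma degI (X : Finset V) (hX : ∀ e ∈ H, e ⊆ X) (h3 : ∀ e ∈ H, e.card = 3) (hP : P33Free H)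
    (hC : ∀ x1 x2 x3 y1 y2 y3, ¬ Tri H x1 x2 x3 y1 y2 y3) {v a b c d : V}
    (nd : [v, a, b, c, d].Nodup) (h1 : {v, a, b} ∈ H) (hg : {a, c, d} ∈ H) :
    (H.filter (v ∈ ·)).card ≤ X.card + 1 ∧ (X.card = 9 → (H.filter (v ∈ ·)).card ≤ 9 ∨
      ∃ y ∈ X, (H.filter (y ∈ ·)).card ≤ 1) := by
  have nd' := nd
  simp only [List.nodup_cons, List.mem_cons, not_or, List.not_mem_nil] at nd
  have hvg : v ∉ ({a, c, d} : Finset V) := by simp; grind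
  have hbg : b ∉ ({a, c, d} : Finset V) := by simp; grind
  set Z := X \ {v, a, b} with hZ
  have habX : ({v, a, b} : Finset V) ⊆ X := hX _ h1
  have hZc : Z.card = X.card - 3 := by
    rw [hZ, Finset.card_sdiff_of_subset habX, h3 _ h1]
  have hX5 : 5 ≤ X.card := by
    have h5 : ({v, a, b, c, d} : Finset V).card = 5 := by
      have := List.toFinset_card_of_nodup nd'
      simpa using this
    rw [← h5]
    apply Finset.card_le_card
    have := hX _ hg
    intro z hz
    by_cases hz' : z ∈ ({v, a, b} : Finset V)
    · exact habX hz'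
    · exact this (by simp at hz hz' ⊢; grind)
  set A := Z.filter (fun x => {v, a, x} ∈ H) with hA
  set B := Z.filter (fun x => {v, b, x} ∈ H) with hB
  have memA : ∀ x, x ∈ A ↔ x ∈ X ∧ x ≠ v ∧ x ≠ a ∧ x ≠ b ∧ {v, a, x} ∈ H := by
    intro x; simp [hA, hZ]; tauto
  have memB : ∀ x, x ∈ B ↔ x ∈ X ∧ x ≠ v ∧ x ≠ a ∧ x ≠ b ∧ {v, b, x} ∈ H := by
    intro x; simp [hB, hZ]; tauto
  have struct : ∀ f ∈ H, v ∈ f → f = {v, a, b} ∨ f = {v, c, d} ∨ (∃ x ∈ A, f = {v, a, x}) ∨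
      (∃ x ∈ B, f = {v, b, x}) := by
    intro f hf hvf
    by_cases haf : a ∈ f
    · obtain ⟨z, z1, z2, rfl⟩ := mem2_form (h3 f hf) (by grind) hvf haf
      by_cases hzb : z = b
      · left; rw [hzb]
      · right; right; left
        exact ⟨z, (memA z).2 ⟨hX _ hf (by simp), z1, z2, hzb, hf⟩, rfl⟩
    by_cases hbf : b ∈ f
    · obtain ⟨z, z1, z2, rfl⟩ := mem2_form (h3 f hf) (by grind) hvf hbf
      right; right; right
      refine ⟨z, (memB z).2 ⟨hX _ hf (by simp), z1, ?_, z2, hf⟩, rfl⟩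
      rintro rfl; simp at haf
    obtain ⟨p, q, ndf, rfl⟩ := mem_form (h3 f hf) hvf
    right; left
    simp at haf hbf ndf
    obtain ⟨k1, k2⟩ := star h3 hP hC (c := p) (d := q) (by simp; grind) h1 hf hg hvg (by simp) hbg
    simp at k1 k2
    have : ({p, q} : Finset V) = {c, d} := by grind
    rw [this]
  have hAB : ∀ x ∈ A, ∀ y ∈ B, x ≠ y → x = c ∨ x = d := by
    intro x hx y hy hxy
    rw [memA] at hx
    rw [memB] at hy
    by_contra hcd
    have := star h3 hP hC (c := b) (d := y) (by simp; grind) hx.2.2.2.2 hy.2.2.2.2 hg hvg (by simp)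
      (by simp; grind)
    exact hbg this.1
  have cA : A.card ≤ X.card - 3 := hZc ▸ Finset.card_le_card (Finset.filter_subset _ _)
  have cB : B.card ≤ X.card - 3 := hZc ▸ Finset.card_le_card (Finset.filter_subset _ _)
  have cd : (H.filter (v ∈ ·)).card ≤ 2 + A.card + B.card := by
    have : H.filter (v ∈ ·) ⊆ (({{v, a, b}, {v, c, d}} : Finset (Finset V)) ∪
        A.image (fun x => {v, a, x})) ∪ B.image (fun x => {v, b, x}) := by
      intro f hf
      rw [Finset.mem_filter] at hf
      simp only [Finset.mem_union, Finset.mem_insert, Finset.mem_singleton, Finset.mem_image]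
      rcases struct f hf.1 hf.2 with h | h | ⟨x, hx, h⟩ | ⟨x, hx, h⟩
      · simp [h]
      · simp [h]
      · left; right; exact ⟨x, hx, h.symm⟩
      · right; exact ⟨x, hx, h.symm⟩
    refine (Finset.card_le_card this).trans ((Finset.card_union_le _ _).trans ?_)
    refine Nat.add_le_add ((Finset.card_union_le _ _).trans (Nat.add_le_add Finset.card_le_two
      Finset.card_image_le)) Finset.card_image_le
  by_cases hAcd : A ⊆ {c, d}
  · have cA2 : A.card ≤ 2 := (Finset.card_le_card hAcd).trans Finset.card_le_two
    refine ⟨by omega, fun h9 => ?_⟩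
    by_cases h10 : (H.filter (v ∈ ·)).card ≤ 9
    · exact Or.inl h10
    right
    have hBZ : B = Z := Finset.eq_of_subset_of_card_le (Finset.filter_subset _ _) (by omega)
    have hAe : A = {c, d} := Finset.eq_of_subset_of_card_le hAcd
      (Finset.card_le_two.trans (by omega))
    have hac : {v, a, c} ∈ H := ((memA c).1 (by rw [hAe]; simp)).2.2.2.2
    have had : {v, a, d} ∈ H := ((memA d).1 (by rw [hAe]; simp)).2.2.2.2
    have hby : ∀ y ∈ X, y ≠ v → y ≠ a → y ≠ b → {v, b, y} ∈ H := by
      intro y h h' h'' h'''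
      have : y ∈ B := by rw [hBZ, hZ]; simp [h, h', h'', h''']
      exact ((memB y).1 this).2.2.2.2
    have pick : ∀ s : Finset V, s.card ≤ 8 → ∃ y ∈ X, y ∉ s := by
      intro s hs
      exact Finset.exists_mem_notMem_of_card_lt_card (by omega)
    obtain ⟨y, hyX, hy⟩ := pick {v, a, b, c, d} (Finset.card_le_five.trans (by norm_num))
    simp only [Finset.mem_insert, Finset.mem_singleton, not_or] at hy
    have hvby := hby y hyX (by grind) (by grind) (by grind)
    have hvyb : {v, y, b} ∈ H := by rwa [perm_a]
    refine ⟨y, hyX, ?_⟩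
    rw [← Finset.card_singleton ({v, b, y} : Finset V)]
    apply Finset.card_le_card
    intro f hf
    rw [Finset.mem_filter] at hf
    obtain ⟨hf, hyf⟩ := hf
    rw [Finset.mem_singleton]
    by_cases hvf : v ∈ f
    · rcases struct f hf hvf with rfl | rfl | ⟨x, hx, rfl⟩ | ⟨x, hx, rfl⟩
      · simp at hyf; grind
      · simp at hyf; grind
      · rw [hAe] at hx; simp at hyf hx; grind
      · simp at hyf
        have : y = x := by grind
        rw [this]
    · exfalso
      have hbf : b ∈ f := by
        by_contra hbf
        have k1 := star h3 hP hC (c := a) (d := c) (by simp; grind) hvyb hac hf hvf hyf hbf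
        have k2 := star h3 hP hC (c := a) (d := d) (by simp; grind) hvyb had hf hvf hyf hbf
        have : ({a, c, d, y} : Finset V) ⊆ f := by
          intro z hz; simp at hz; grind
        have h4 : ({a, c, d, y} : Finset V).card = 4 := by
          have : [a, c, d, y].Nodup := by simp; grind
          have := List.toFinset_card_of_nodup this
          simpa using this
        have := Finset.card_le_card this
        have := h3 f hf
        omega
      obtain ⟨z, z1, z2, rfl⟩ := mem2_form (h3 f hf) (by grind) hyf hbf
      obtain ⟨y', hyX', hy'⟩ := pick ({v, a, b, c, d} ∪ {y, z})
        ((Finset.card_union_le _ _).trans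
          ((Nat.add_le_add Finset.card_le_five Finset.card_le_two).trans (by norm_num)))
      simp only [Finset.mem_union, Finset.mem_insert, Finset.mem_singleton, not_or] at hy'
      have hvby' := hby y' hyX' (by grind) (by grind) (by grind)
      have := star h3 hP hC (a := b) (b := y') (c := a) (d := c) (by simp; grind) hvby' hac hf hvf
        hbf (by simp; grind)
      simp at this
      grind
  · obtain ⟨x, hxA, hx⟩ := Finset.not_subset.1 hAcd
    simp at hx
    have hBx : ∀ y ∈ B, y = x := by
      intro y hy
      by_contra h
      have := hAB x hxA y hy (fun h' => h h'.symm)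
      tauto
    by_cases hB0 : B = ∅
    · have : B.card = 0 := by rw [hB0]; simp
      exact ⟨by omega, fun h9 => Or.inl (by omega)⟩
    · obtain ⟨y, hy⟩ := Finset.nonempty_iff_ne_empty.2 hB0
      have c1 : B.card ≤ 1 := Finset.card_le_one.2 fun p hp q hq => (hBx p hp).trans (hBx q hq).symm
      have hA3 : A ⊆ {c, d, x} := by
        intro p hp
        have := hAB p hp y hy
        have := hBx y hy
        simp; grind
      have := (Finset.card_le_card hA3).trans Finset.card_le_three
      exact ⟨by omega, fun h9 => Or.inl (by omega)⟩

lemma arithII {n h hv g2 g3 hi s i : ℕ} (hn : n = s + i + 1) (hh : h ≤ hv + g2 + g3 + hi)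
    (h1 : 2 * hv + 3 * g3 ≤ s * (s - 1)) (h2 : g2 ≤ (s - 1) * i) (h3 : 2 * hi ≤ i * (i + 1))
    (hs : 4 ≤ s) : 2 * h ≤ (n - 1) * (n - 2) := by
  obtain ⟨t, rfl⟩ : ∃ t, s = t + 1 := ⟨s - 1, by omega⟩
  have e1 : n - 1 = t + 1 + i := by omega
  have e2 : n - 2 = t + i := by omega
  rw [e1, e2]
  simp only [Nat.add_sub_cancel] at h1 h2
  nlinarith

lemma degII (X : Finset V) (hX : ∀ e ∈ H, e ⊆ X) (h3 : ∀ e ∈ H, e.card = 3)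
    (ih : ∀ Y : Finset V, Y.card < X.card →
      2 * (H.filter (· ⊆ Y)).card ≤ Y.card * (Y.card + 1))
    {v : V} (hvX : v ∈ X)
    (hcl : ∀ g ∈ H, v ∉ g → ∀ p q, {v, p, q} ∈ H → p ∈ g → q ∈ g) :
    (H.filter (v ∈ ·)).card ≤ 3 ∨ 2 * H.card ≤ (X.card - 1) * (X.card - 2) := by
  set Hv := H.filter (v ∈ ·) with hHv
  set S := (X.erase v).filter (fun p => ∃ e ∈ H, v ∈ e ∧ p ∈ e) with hS
  set I := (X.erase v) \ S with hI
  have hSs : S ⊆ X.erase v := Finset.filter_subset _ _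
  have cE : (X.erase v).card = X.card - 1 := Finset.card_erase_of_mem hvX
  have cI : I.card = (X.erase v).card - S.card := by rw [hI, Finset.card_sdiff_of_subset hSs]
  have cS := Finset.card_le_card hSs
  have cX : 0 < X.card := Finset.card_pos.2 ⟨v, hvX⟩
  have hn : X.card = S.card + I.card + 1 := by omega
  have hvS : v ∉ S := fun h => by have := hSs h; simp at this
  have memS : ∀ e ∈ H, v ∈ e → ∀ p ∈ e, p ≠ v → p ∈ S := by
    intro e he hve p hp hpv
    rw [hS, Finset.mem_filter, Finset.mem_erase]
    exact ⟨⟨hpv, hX e he hp⟩, e, he, hve, hp⟩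
  have sub2 : Hv ⊆ (S.powersetCard 2).image (insert v) := by
    intro e he
    rw [hHv, Finset.mem_filter] at he
    refine Finset.mem_image.2 ⟨e.erase v, ?_, Finset.insert_erase he.2⟩
    rw [Finset.mem_powersetCard, Finset.card_erase_of_mem he.2, h3 e he.1]
    refine ⟨fun p hp => ?_, rfl⟩
    rw [Finset.mem_erase] at hp
    exact memS e he.1 he.2 p hp.2 hp.1
  rcases Nat.lt_or_ge S.card 4 with hs | hs
  · left
    have := (Finset.card_le_card sub2).trans Finset.card_image_le
    rw [Finset.card_powersetCard] at this
    have h2 : S.card.choose 2 ≤ Nat.choose 3 2 := Nat.choose_le_choose 2 (by omega)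
    have : Nat.choose 3 2 = 3 := by decide
    omega
  right
  have part : ∀ p, ∃ q, p ∈ S → q ∈ S ∧ q ≠ p ∧ {v, p, q} ∈ H := by
    intro p
    by_cases hp : p ∈ S
    · have hp' := hp
      rw [hS, Finset.mem_filter, Finset.mem_erase] at hp'
      obtain ⟨⟨hpv, -⟩, e, he, hve, hpe⟩ := hp'
      obtain ⟨q, hq1, hq2, rfl⟩ := mem2_form (h3 e he) (Ne.symm hpv) hve hpe
      exact ⟨q, fun _ => ⟨memS _ he hve q (by simp) hq1, hq2, he⟩⟩
    · exact ⟨p, fun h => absurd h hp⟩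
  choose q hq using part
  have qin : ∀ g ∈ H, v ∉ g → ∀ p ∈ S, p ∈ g → q p ∈ g := fun g hg hv p hp hpg =>
    hcl g hg hv p (q p) (hq p hp).2.2 hpg
  have qout : ∀ g ∈ H, v ∉ g → ∀ p ∈ S, q p ∈ g → p ∈ g := fun g hg hv p hp hpg =>
    hcl g hg hv (q p) p (by rw [perm_a]; exact (hq p hp).2.2) hpg
  set G2 := H.filter (fun g => v ∉ g ∧ (g ∩ S).card = 2) with hG2
  set G3 := H.filter (fun g => v ∉ g ∧ g ⊆ S) with hG3
  have cover : H ⊆ Hv ∪ G2 ∪ G3 ∪ H.filter (· ⊆ I) := by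
    intro e he
    by_cases hv : v ∈ e
    · simp [hHv, he, hv]
    have c := h3 e he
    have c2 : (e ∩ S).card ≤ 3 := c ▸ Finset.card_le_card Finset.inter_subset_left
    by_cases k2 : (e ∩ S).card = 2
    · simp [hG2, he, hv, k2]
    by_cases k3 : (e ∩ S).card = 3
    · have : e ∩ S = e := Finset.eq_of_subset_of_card_le Finset.inter_subset_left (by omega)
      have : e ⊆ S := by rw [← this]; exact Finset.inter_subset_right
      simp [hG3, he, hv, this]
    have k0 : e ∩ S = ∅ := by
      by_contra hne
      obtain ⟨p, hp⟩ := Finset.nonempty_iff_ne_empty.2 hne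
      rw [Finset.mem_inter] at hp
      have h1 : 1 < (e ∩ S).card := Finset.one_lt_card.2
        ⟨p, Finset.mem_inter.2 hp, q p, Finset.mem_inter.2 ⟨qin e he hv p hp.2 hp.1, (hq p hp.2).1⟩,
          (hq p hp.2).2.1.symm⟩
      omega
    have : e ⊆ I := by
      intro z hz
      rw [hI, Finset.mem_sdiff, Finset.mem_erase]
      refine ⟨⟨fun h => hv (h ▸ hz), hX e he hz⟩, fun hzS => ?_⟩
      have : z ∈ e ∩ S := Finset.mem_inter.2 ⟨hz, hzS⟩
      rw [k0] at this; simp at this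
    simp [he, this]
  have hh : H.card ≤ Hv.card + G2.card + G3.card + (H.filter (· ⊆ I)).card := by
    have a := Finset.card_le_card cover
    have b := Finset.card_union_le (Hv ∪ G2 ∪ G3) (H.filter (· ⊆ I))
    have c := Finset.card_union_le (Hv ∪ G2) G3
    have d := Finset.card_union_le Hv G2
    omega
  have hi := ih I (by omega)
  have h2 : G2.card ≤ (S.card - 1) * I.card := by
    obtain ⟨p0, hp0⟩ : S.Nonempty := Finset.card_pos.1 (by omega)
    rw [← Finset.card_erase_of_mem hp0, ← Finset.card_product]
    refine (Finset.card_le_card (t := ((S.erase p0) ×ˢ I).image (fun x => {x.2, x.1, q x.1})) ?_).trans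
      Finset.card_image_le
    intro g hg
    rw [hG2, Finset.mem_filter] at hg
    obtain ⟨hg, hvg, hg2⟩ := hg
    obtain ⟨p, hp, hpp⟩ := Finset.exists_mem_ne (by omega : 1 < (g ∩ S).card) p0
    obtain ⟨w, u, u', hw, hu, hu', huu, hge, hgS⟩ := mid_form (h3 g hg) hg2
    have hp' := Finset.mem_inter.1 hp
    have hqp : q p ∈ g ∩ S := Finset.mem_inter.2 ⟨qin g hg hvg p hp'.2 hp'.1, (hq p hp'.2).1⟩
    have hne := (hq p hp'.2).2.1
    have hwg : w ∈ g := by rw [hge]; simp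
    refine Finset.mem_image.2 ⟨(p, w), Finset.mem_product.2 ⟨Finset.mem_erase.2 ⟨hpp, hp'.2⟩, ?_⟩, ?_⟩
    · rw [hI, Finset.mem_sdiff, Finset.mem_erase]
      exact ⟨⟨fun h => hvg (h ▸ hwg), hX g hg hwg⟩, hw⟩
    · rw [hgS] at hp hqp
      simp only
      rw [hge]
      simp only [Finset.mem_insert, Finset.mem_singleton] at hp hqp
      have : ({p, q p} : Finset V) = {u, u'} := by
        rcases hp with h | h <;> rcases hqp with h' | h'
        · exact absurd (h'.trans h.symm) hne
        · rw [h', h]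
        · rw [h', h, Finset.pair_comm]
        · exact absurd (h'.trans h.symm) hne
      rw [this]
  have uniq : ∀ g ∈ G3, ∀ g' ∈ G3, ∀ p, p ∈ g → p ∈ g' → g = g' := by
    intro g hg g' hg' p hp hp'
    rw [hG3, Finset.mem_filter] at hg hg'
    obtain ⟨hg, hvg, hgS⟩ := hg
    obtain ⟨hg', hvg', hgS'⟩ := hg'
    refine Finset.eq_of_subset_of_card_le ?_ (by rw [h3 g hg, h3 g' hg'])
    intro r hr
    by_contra hr'
    have a1 := qin g hg hvg p (hgS hp) hp
    have a2 := qin g' hg' hvg' p (hgS hp) hp'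
    have a3 := qin g hg hvg r (hgS hr) hr
    have a4 : q r ∉ g' := fun h => hr' (qout g' hg' hvg' r (hgS hr) h)
    have a5 := (hq p (hgS hp)).2.1
    have a6 := (hq r (hgS hr)).2.1
    have nd : [p, q p, r, q r].Nodup := by
      have b1 : p ≠ r := fun h => hr' (h ▸ hp')
      have b2 : p ≠ q r := fun h => a4 (h ▸ hp')
      have b3 : q p ≠ r := fun h => hr' (h ▸ a2)
      have b4 : q p ≠ q r := fun h => a4 (h ▸ a2)
      simp [a5.symm, a6.symm, b1, b2, b3, b4]
    have h4 := List.toFinset_card_of_nodup nd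
    have hsub : [p, q p, r, q r].toFinset ⊆ g := by
      intro z hz
      simp at hz
      rcases hz with rfl | rfl | rfl | rfl <;> assumption
    have := Finset.card_le_card hsub
    rw [h4, h3 g hg] at this
    simp at this
  have h1 : 2 * Hv.card + 3 * G3.card ≤ S.card * (S.card - 1) := by
    have e1 : ∑ p ∈ S, (Hv.filter (fun e => p ∈ e)).card = 2 * Hv.card := by
      have := Finset.sum_card_bipartiteAbove_eq_sum_card_bipartiteBelow (s := S) (t := Hv)
        (fun p e => p ∈ e)
      simp only [Finset.bipartiteAbove, Finset.bipartiteBelow] at this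
      rw [this, Finset.sum_congr rfl (g := fun _ => 2), Finset.sum_const, smul_eq_mul, mul_comm]
      intro e he
      rw [hHv, Finset.mem_filter] at he
      have : S.filter (fun p => p ∈ e) = e.erase v := by
        ext z
        rw [Finset.mem_filter, Finset.mem_erase]
        exact ⟨fun h => ⟨fun h' => hvS (h' ▸ h.1), h.2⟩, fun h => ⟨memS e he.1 he.2 z h.2 h.1, h.2⟩⟩
      rw [this, Finset.card_erase_of_mem he.2, h3 e he.1]
    have e2 : ∑ p ∈ S, (G3.filter (fun e => p ∈ e)).card = 3 * G3.card := by
      have := Finset.sum_card_bipartiteAbove_eq_sum_card_bipartiteBelow (s := S) (t := G3)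
        (fun p e => p ∈ e)
      simp only [Finset.bipartiteAbove, Finset.bipartiteBelow] at this
      rw [this, Finset.sum_congr rfl (g := fun _ => 3), Finset.sum_const, smul_eq_mul, mul_comm]
      intro e he
      rw [hG3, Finset.mem_filter] at he
      have : S.filter (fun p => p ∈ e) = e := by
        ext z
        rw [Finset.mem_filter]
        exact ⟨fun h => h.2, fun h => ⟨he.2.2 h, h⟩⟩
      rw [this, h3 e he.1]
    rw [← e1, ← e2, ← Finset.sum_add_distrib, ← smul_eq_mul (a := S.card)]
    apply Finset.sum_le_card_nsmul
    intro p hp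
    have hvp : v ≠ p := fun h => hvS (h ▸ hp)
    rcases Finset.eq_empty_or_nonempty (G3.filter (fun e => p ∈ e)) with h0 | ⟨g, hg⟩
    · rw [h0, Finset.card_empty, add_zero, ← Finset.card_erase_of_mem hp]
      refine (Finset.card_le_card (t := (S.erase p).image (fun r => {v, p, r})) ?_).trans
        Finset.card_image_le
      intro e he
      simp only [hHv, Finset.mem_filter] at he
      obtain ⟨r, hr1, hr2, rfl⟩ := mem2_form (h3 e he.1.1) hvp he.1.2 he.2
      exact Finset.mem_image.2 ⟨r, Finset.mem_erase.2 ⟨hr2, memS _ he.1.1 he.1.2 r (by simp) hr1⟩, rfl⟩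
    · rw [Finset.mem_filter] at hg
      have hg3 := hg.1
      rw [hG3, Finset.mem_filter] at hg3
      have c1 : (Hv.filter (fun e => p ∈ e)).card ≤ 2 := by
        have : (g.erase p).card = 2 := by rw [Finset.card_erase_of_mem hg.2, h3 g hg3.1]
        rw [← this]
        refine (Finset.card_le_card (t := (g.erase p).image (fun r => {v, p, r})) ?_).trans
          Finset.card_image_le
        intro e he
        simp only [hHv, Finset.mem_filter] at he
        obtain ⟨r, hr1, hr2, rfl⟩ := mem2_form (h3 e he.1.1) hvp he.1.2 he.2
        exact Finset.mem_image.2 ⟨r, Finset.mem_erase.2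
          ⟨hr2, hcl g hg3.1 hg3.2.1 p r he.1.1 hg.2⟩, rfl⟩
      have c2 : (G3.filter (fun e => p ∈ e)).card ≤ 1 := by
        apply Finset.card_le_one.2
        intro g1 h1 g2 h2
        rw [Finset.mem_filter] at h1 h2
        exact uniq _ h1.1 _ h2.1 p h1.2 h2.2
      omega
  exact arithII hn hh h1 h2 hi hs

theorem main : ∀ n : ℕ, ∀ X : Finset V, X.card = n → ∀ H : Finset (Finset V),
    (∀ e ∈ H, e ⊆ X) → (∀ e ∈ H, e.card = 3) → P33Free H → Bd X.card H.card := by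
  intro n
  induction n using Nat.strong_induction_on with
  | _ n IH =>
  intro X hXn H hX h3 hP
  have ih : ∀ Y : Finset V, Y.card < X.card →
      2 * (H.filter (· ⊆ Y)).card ≤ Y.card * (Y.card + 1) := by
    intro Y hY
    refine (IH Y.card (hXn ▸ hY) Y rfl (H.filter (· ⊆ Y)) (fun e he => (Finset.mem_filter.1 he).2)
      (fun e he => h3 e (Finset.mem_filter.1 he).1) ?_).1
    rintro ⟨e1, e2, e3, a, b, c, r⟩
    exact hP ⟨e1, e2, e3, (Finset.mem_filter.1 a).1, (Finset.mem_filter.1 b).1,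
      (Finset.mem_filter.1 c).1, r⟩
  by_cases hC : ∀ x1 x2 x3 y1 y2 y3, ¬ Tri H x1 x2 x3 y1 y2 y3
  swap
  · push Not at hC
    obtain ⟨x1, x2, x3, y1, y2, y3, T⟩ := hC
    exact caseA X hX h3 hP ih T
  rcases Finset.eq_empty_or_nonempty H with h0 | ⟨e0, he0⟩
  · rw [h0]; exact ⟨by simp, by simp⟩
  have hn3 : 3 ≤ X.card := h3 e0 he0 ▸ Finset.card_le_card (hX e0 he0)
  by_cases hbig : 2 * H.card ≤ (X.card - 1) * (X.card - 2)
  · refine ⟨hbig.trans (Nat.mul_le_mul (by omega) (by omega)), fun _ => hbig⟩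
  have deg : ∀ v ∈ X, (H.filter (v ∈ ·)).card ≤ X.card + 1 ∧ (X.card = 9 →
      (H.filter (v ∈ ·)).card ≤ 9 ∨ ∃ y ∈ X, (H.filter (y ∈ ·)).card ≤ 1) := by
    intro v hv
    by_cases hcl : ∀ g ∈ H, v ∉ g → ∀ p q, {v, p, q} ∈ H → p ∈ g → q ∈ g
    · have := (degII X hX h3 ih hv hcl).resolve_right hbig
      exact ⟨by omega, fun _ => Or.inl (by omega)⟩
    · push Not at hcl
      obtain ⟨g, hg, hvg, a, b, hab, hag, hbg⟩ := hcl
      obtain ⟨c, d, nd, rfl⟩ := mem_form (h3 g hg) hag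
      have hvb : v ≠ b := by
        rintro rfl
        have h := h3 _ hab
        have : ({v, a, v} : Finset V) = {v, a} := by grind
        rw [this] at h
        have := Finset.card_le_two (a := v) (b := a)
        omega
      exact degI X hX h3 hP hC (by simp at nd hvg hbg ⊢; grind) hab hg
  have sum : ∑ v ∈ X, (H.filter (fun e => v ∈ e)).card = 3 * H.card := by
    have := Finset.sum_card_bipartiteAbove_eq_sum_card_bipartiteBelow (s := X) (t := H)
      (fun p e => p ∈ e)
    simp only [Finset.bipartiteAbove, Finset.bipartiteBelow] at this
    rw [this, Finset.sum_congr rfl (g := fun _ => 3), Finset.sum_const, smul_eq_mul, mul_comm]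
    intro e he
    have : X.filter (fun p => p ∈ e) = e := by
      ext z
      rw [Finset.mem_filter]
      exact ⟨fun h => h.2, fun h => ⟨hX e he h, h⟩⟩
    rw [this, h3 e he]
  have s1 : 3 * H.card ≤ X.card * (X.card + 1) := by
    rw [← sum, ← smul_eq_mul (a := X.card)]
    exact Finset.sum_le_card_nsmul _ _ _ fun v hv => (deg v hv).1
  refine ⟨by omega, fun h9 => ?_⟩
  rcases Nat.lt_or_ge X.card 11 with hlt | hge
  · obtain h | h : X.card = 9 ∨ X.card = 10 := by omega
    · have s2 : 3 * H.card ≤ 81 := by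
        by_cases hy : ∃ y ∈ X, (H.filter (y ∈ ·)).card ≤ 1
        · obtain ⟨y, hyX, hy⟩ := hy
          rw [← sum, ← Finset.add_sum_erase _ _ hyX]
          have : ∑ v ∈ X.erase y, (H.filter (fun e => v ∈ e)).card ≤ (X.erase y).card • 10 :=
            Finset.sum_le_card_nsmul _ _ _ fun v hv => by
              have := (deg v (Finset.mem_of_mem_erase hv)).1
              omega
          rw [Finset.card_erase_of_mem hyX, h, smul_eq_mul] at this
          omega
        · have : ∑ v ∈ X, (H.filter (fun e => v ∈ e)).card ≤ X.card • 9 :=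
            Finset.sum_le_card_nsmul _ _ _ fun v hv => ((deg v hv).2 h).resolve_right hy
          rw [h, smul_eq_mul] at this
          omega
      rw [h]; omega
    · rw [h] at s1 ⊢; omega
  · obtain ⟨m, hm⟩ : ∃ m, X.card = m + 11 := ⟨X.card - 11, by omega⟩
    rw [hm] at s1 ⊢
    have e1 : m + 11 - 1 = m + 10 := by omega
    have e2 : m + 11 - 2 = m + 9 := by omega
    rw [e1, e2]
    nlinarith
end
end LP

/-- For `n ≥ 9`, every 3-uniform hypergraph on `n` vertices with no loose path
of length three has at most `C(n-1, 2)` edges, and the bound is attained by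
the full star at any vertex (all 3-sets containing a fixed vertex). -/
theorem stmt_18 {V : Type*} [Fintype V] [DecidableEq V] {n : ℕ}
    (hn : 9 ≤ n) (hV : Fintype.card V = n) :
    (∀ H : Finset (Finset V), (∀ e ∈ H, e.card = 3) → P33Free H →
      H.card ≤ Nat.choose (n - 1) 2) ∧
    (∀ v : V,
      P33Free ((Finset.univ : Finset (Finset V)).filter
        (fun e => e.card = 3 ∧ v ∈ e)) ∧
      ((Finset.univ : Finset (Finset V)).filter
        (fun e => e.card = 3 ∧ v ∈ e)).card = Nat.choose (n - 1) 2) := by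
  refine ⟨fun H h3 hP => ?_, fun v => ⟨?_, ?_⟩⟩
  · have h := LP.main n (Finset.univ : Finset V) (by rw [Finset.card_univ, hV]) H
      (fun e _ => Finset.subset_univ e) h3 hP
    rw [Finset.card_univ, hV] at h
    have h2 := h.2 hn
    rw [Nat.choose_two_right, Nat.le_div_iff_mul_le (by norm_num)]
    have h5 : n - 1 - 1 = n - 2 := by omega
    rw [h5]
    omega
  · rintro ⟨e₁, e₂, e₃, h1, h2, h3, -, -, -, h⟩
    simp only [Finset.mem_filter, Finset.mem_univ, true_and] at h1 h3
    have : v ∈ e₁ ∩ e₃ := Finset.mem_inter.2 ⟨h1.2, h3.2⟩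
    rw [h] at this
    simp at this
  · have hE : ((Finset.univ : Finset (Finset V)).filter (fun e => e.card = 3 ∧ v ∈ e))
        = (((Finset.univ : Finset V).erase v).powersetCard 2).image (insert v) := by
      ext e
      simp only [Finset.mem_filter, Finset.mem_univ, true_and, Finset.mem_image,
        Finset.mem_powersetCard]
      constructor
      · rintro ⟨hc, hv⟩
        refine ⟨e.erase v, ⟨Finset.erase_subset_erase _ (Finset.subset_univ _), ?_⟩,
          Finset.insert_erase hv⟩
        rw [Finset.card_erase_of_mem hv, hc]
      · rintro ⟨s, ⟨hs, hc⟩, rfl⟩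
        have hv : v ∉ s := fun h => Finset.notMem_erase v _ (hs h)
        exact ⟨by rw [Finset.card_insert_of_notMem hv, hc], Finset.mem_insert_self _ _⟩
    rw [hE, Finset.card_image_of_injOn, Finset.card_powersetCard,
      Finset.card_erase_of_mem (Finset.mem_univ v), Finset.card_univ, hV]
    intro s hs t ht hst
    have hs' := (Finset.mem_powersetCard.1 (Finset.mem_coe.1 hs)).1
    have ht' := (Finset.mem_powersetCard.1 (Finset.mem_coe.1 ht)).1
    have hvs : v ∉ s := fun h => Finset.notMem_erase v _ (hs' h)
    have hvt : v ∉ t := fun h => Finset.notMem_erase v _ (ht' h)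
    have hst' : insert v s = insert v t := hst
    rw [← Finset.erase_insert hvs, hst', Finset.erase_insert hvt]
end
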